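/- arXiv:2307.01765 — 2 statements merged into one kernel-verified Lean document; each statement's English description precedes it below -/
import Mathlib

section
/- Let (X,d) be a proper metric space, N ≥ 1, λ = (λ₁,…,λ_N) weights with λᵢ ≥ 0 and ∑λᵢ = 1, and ν₁,…,ν_N ∈ 𝒫₁(X). Then the functional F(μ) := ∑ᵢ λᵢ W₁(νᵢ,μ) attains its minimum over 𝒫₁(X), and the set Med_λ(ν₁,…,ν_N) of minimizers is a nonempty, convex, and narrowly compact subset of 𝒫₁(X). -/
open MeasureTheory Filter Topology
open scoped ENNReal NNReal

/-- The set of couplings (transport plans): Borel probability measures on `X × X`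
with first marginal `μ` and second marginal `ν`. -/
def Couplings {X : Type*} [MeasurableSpace X] (μ ν : Measure X) :
    Set (Measure (X × X)) :=
  {γ | IsProbabilityMeasure γ ∧ γ.map Prod.fst = μ ∧ γ.map Prod.snd = ν}

/-- The Wasserstein distance of order `1` between two measures on a metric space:
the infimum over couplings `γ` of `∫ d(x,y) dγ`. -/
noncomputable def W1 {X : Type*} [MetricSpace X] [MeasurableSpace X]
    (μ ν : Measure X) : ℝ :=
  (⨅ γ ∈ Couplings μ ν, ∫⁻ p, edist p.1 p.2 ∂γ).toReal

/-- `𝒫₁(X)`: Borel probability measures on `X` with finite first moment. -/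
def P1 (X : Type*) [MetricSpace X] [MeasurableSpace X] : Set (Measure X) :=
  {μ | IsProbabilityMeasure μ ∧ ∀ x₀ : X, Integrable (fun x => dist x₀ x) μ}

/-- `λ` belongs to the simplex `Δ_N`: nonnegative weights summing to `1`. -/
def memSimplex {N : ℕ} (l : Fin N → ℝ) : Prop :=
  (∀ i, 0 ≤ l i) ∧ ∑ i, l i = 1

/-- The dispersion functional `μ ↦ ∑ᵢ λᵢ W₁(νᵢ, μ)`. -/
noncomputable def medCost {X : Type*} [MetricSpace X] [MeasurableSpace X] {N : ℕ}
    (l : Fin N → ℝ) (ν : Fin N → Measure X) (μ : Measure X) : ℝ :=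
  ∑ i, l i * W1 (ν i) μ

/-- The set of Wasserstein medians of `ν₁, …, ν_N` with weights `λ`:
minimizers over `𝒫₁(X)` of the dispersion functional. -/
def Med {X : Type*} [MetricSpace X] [MeasurableSpace X] {N : ℕ}
    (l : Fin N → ℝ) (ν : Fin N → Measure X) : Set (Measure X) :=
  {μ | μ ∈ P1 X ∧ ∀ ρ ∈ P1 X, medCost l ν μ ≤ medCost l ν ρ}

/-! The functional is studied with values in `ℝ≥0∞`, where it is finite exactly on `𝒫₁(X)`, so that
medians are its global minimizers among all probability measures. By Markov's inequality, a plan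
whose transport cost is at most `b` and whose first marginal is mostly carried by a compact set `K`
is mostly carried by the product of `K` with a closed thickening of `K`, which is compact because
`X` is proper. Prokhorov's theorem then makes the sublevel sets of `W₁(μ, ·)`, hence those of the
functional, narrowly compact, which gives existence of medians and compactness of their set.
Convexity holds because convex combinations of plans are plans. -/

section Argmin

variable {Y β : Type*} [TopologicalSpace Y] [LinearOrder β] {f : Y → β} {y₀ : Y}

theorem exists_forall_le_of_isCompact_setOf_le (hf : LowerSemicontinuous f)
    (hc : IsCompact {y | f y ≤ f y₀}) : ∃ x, ∀ y, f x ≤ f y := by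
  obtain ⟨x, hx, hmin⟩ := (hf.lowerSemicontinuousOn _).exists_isMinOn ⟨y₀, le_refl (f y₀)⟩ hc
  refine ⟨x, fun y => ?_⟩
  rcases le_total (f y) (f y₀) with hy | hy
  · exact hmin hy
  · exact le_trans hx hy

theorem isCompact_setOf_forall_le (hf : LowerSemicontinuous f)
    (hc : IsCompact {y | f y ≤ f y₀}) : IsCompact {x | ∀ y, f x ≤ f y} := by
  refine hc.of_isClosed_subset ?_ fun x hx => hx y₀
  simp only [Set.ofPred_forall]
  exact isClosed_iInter fun y => hf.isClosed_preimage (f y)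

end Argmin

section NarrowTopology

variable {Y : Type*} [TopologicalSpace Y] [MeasurableSpace Y] [OpensMeasurableSpace Y]

theorem lowerSemicontinuous_lintegral_of_continuous {f : Y → ℝ≥0∞} (hf : Continuous f) :
    LowerSemicontinuous fun γ : ProbabilityMeasure Y => ∫⁻ y, f y ∂(γ : Measure Y) := by
  have hfin (n : ℕ) (y : Y) : min (f y) n ≠ ∞ := (min_lt_of_right_lt (by simp)).ne
  let g (n : ℕ) : BoundedContinuousFunction Y ℝ≥0 :=
    .mkOfBound ⟨fun y => (min (f y) n).toNNReal,
      ENNReal.continuousOn_toNNReal.comp_continuous (by fun_prop) (hfin n)⟩ n fun x y => by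
        have hle (z : Y) : (min (f z) n).toNNReal ≤ (n : ℝ≥0) :=
          ENNReal.toNNReal_mono ENNReal.coe_ne_top (min_le_right _ _)
        have hdist := Real.dist_le_of_mem_Icc (x' := 0) (y' := n)
          ⟨NNReal.coe_nonneg _, hle x⟩ ⟨NNReal.coe_nonneg _, hle y⟩
        rwa [sub_zero] at hdist
  have hg (n : ℕ) (y : Y) : (g n y : ℝ≥0∞) = min (f y) n := ENNReal.coe_toNNReal (hfin n y)
  have hsup (y : Y) : ⨆ n, (g n y : ℝ≥0∞) = f y := by
    simp only [hg, ← inf_iSup_eq, ENNReal.iSup_natCast, inf_top_eq]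
  have hmono : Monotone fun n (y : Y) => (g n y : ℝ≥0∞) := fun m n hmn y => by
    simp only [hg]
    gcongr
  have hlint (γ : ProbabilityMeasure Y) :
      ∫⁻ y, f y ∂(γ : Measure Y) = ⨆ n, ∫⁻ y, g n y ∂(γ : Measure Y) := by
    rw [← lintegral_iSup (fun n => (g n).continuous.measurable.coe_nnreal_ennreal) hmono]
    simp only [hsup]
  simp only [hlint]
  exact lowerSemicontinuous_iSup fun n =>
    (ProbabilityMeasure.continuous_lintegral_boundedContinuousFunction (g n)).lowerSemicontinuous

end NarrowTopology

section Couplings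

variable {X : Type*} [MeasurableSpace X] {μ₁ μ₂ ν₁ ν₂ : Measure X}

theorem isProbabilityMeasure_smul_add_smul [IsProbabilityMeasure μ₁] [IsProbabilityMeasure μ₂]
    {a b : ℝ≥0} (hab : a + b = 1) : IsProbabilityMeasure (a • μ₁ + b • μ₂) :=
  ⟨by simp [← ENNReal.coe_add, hab]⟩

theorem prod_mem_Couplings (μ ν : Measure X) [IsProbabilityMeasure μ] [IsProbabilityMeasure ν] :
    μ.prod ν ∈ Couplings μ ν :=
  ⟨inferInstance, by simp, by simp⟩

theorem smul_add_smul_mem_Couplings {γ₁ γ₂ : Measure (X × X)} (h₁ : γ₁ ∈ Couplings μ₁ ν₁)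
    (h₂ : γ₂ ∈ Couplings μ₂ ν₂) {a b : ℝ≥0} (hab : a + b = 1) :
    a • γ₁ + b • γ₂ ∈ Couplings (a • μ₁ + b • μ₂) (a • ν₁ + b • ν₂) := by
  obtain ⟨_, rfl, rfl⟩ := h₁
  obtain ⟨_, rfl, rfl⟩ := h₂
  refine ⟨isProbabilityMeasure_smul_add_smul hab, ?_, ?_⟩
  · simp only [Measure.map_add _ _ measurable_fst, Measure.map_smul]
  · simp only [Measure.map_add _ _ measurable_snd, Measure.map_smul]

end Couplings

section ExtendedWasserstein

variable {X : Type*} [MeasurableSpace X] [PseudoEMetricSpace X] {μ ν μ₁ μ₂ ν₁ ν₂ : Measure X}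

/-- The Wasserstein distance of order `1` with values in `ℝ≥0∞`. Unlike `W1`, it is `∞` and not `0`
when every coupling has infinite cost. -/
noncomputable def eW1 (μ ν : Measure X) : ℝ≥0∞ :=
  ⨅ γ ∈ Couplings μ ν, ∫⁻ p, edist p.1 p.2 ∂γ

theorem eW1_le_lintegral_edist {γ : Measure (X × X)} (hγ : γ ∈ Couplings μ ν) :
    eW1 μ ν ≤ ∫⁻ p, edist p.1 p.2 ∂γ :=
  iInf₂_le γ hγ

theorem eW1_le_iff_forall_exists_lintegral_edist_le {b : ℝ≥0∞} :
    eW1 μ ν ≤ b ↔ ∀ c ∈ Set.Ioo b ∞, ∃ γ ∈ Couplings μ ν, ∫⁻ p, edist p.1 p.2 ∂γ ≤ c := by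
  refine ⟨fun h c hc => ?_, fun h => le_of_forall_gt_imp_ge_of_dense fun c hc => ?_⟩
  · obtain ⟨γ, hγ, hlt⟩ : ∃ γ ∈ Couplings μ ν, ∫⁻ p, edist p.1 p.2 ∂γ < c := by
      simpa only [eW1, iInf_lt_iff, exists_prop] using h.trans_lt hc.1
    exact ⟨γ, hγ, hlt.le⟩
  · rcases eq_or_ne c ∞ with rfl | hc'
    · exact le_top
    · obtain ⟨γ, hγ, hle⟩ := h c ⟨hc, hc'.lt_top⟩
      exact (eW1_le_lintegral_edist hγ).trans hle

theorem eW1_smul_add_smul_le {a b : ℝ≥0} (hab : a + b = 1) :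
    eW1 (a • μ₁ + b • μ₂) (a • ν₁ + b • ν₂) ≤ a * eW1 μ₁ ν₁ + b * eW1 μ₂ ν₂ := by
  rcases eq_or_ne a 0 with rfl | ha
  · simp_all
  rcases eq_or_ne b 0 with rfl | hb
  · simp_all
  have mul_eW1 {c : ℝ≥0} (hc : c ≠ 0) (μ ν : Measure X) :
      c * eW1 μ ν = ⨅ γ ∈ Couplings μ ν, c * ∫⁻ p, edist p.1 p.2 ∂γ := by
    simp only [eW1, ENNReal.mul_iInf_of_ne (ENNReal.coe_ne_zero.2 hc) ENNReal.coe_ne_top]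
  rw [mul_eW1 ha, mul_eW1 hb]
  refine ENNReal.le_iInf₂_add_iInf₂ fun γ₁ h₁ γ₂ h₂ => ?_
  calc eW1 (a • μ₁ + b • μ₂) (a • ν₁ + b • ν₂)
      ≤ ∫⁻ p, edist p.1 p.2 ∂(a • γ₁ + b • γ₂) :=
        eW1_le_lintegral_edist (smul_add_smul_mem_Couplings h₁ h₂ hab)
    _ = a * ∫⁻ p, edist p.1 p.2 ∂γ₁ + b * ∫⁻ p, edist p.1 p.2 ∂γ₂ := by
        simp only [lintegral_add_measure, lintegral_smul_measure, ENNReal.smul_def, smul_eq_mul]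

section FirstMoment

variable [OpensMeasurableSpace X]

theorem eW1_le_lintegral_edist_add_lintegral_edist [IsProbabilityMeasure μ]
    [IsProbabilityMeasure ν] (x₀ : X) :
    eW1 μ ν ≤ ∫⁻ x, edist x₀ x ∂μ + ∫⁻ x, edist x₀ x ∂ν := by
  have hm : Measurable fun x : X => edist x₀ x := by fun_prop
  calc eW1 μ ν ≤ ∫⁻ p, edist p.1 p.2 ∂μ.prod ν :=
        eW1_le_lintegral_edist (prod_mem_Couplings μ ν)
    _ ≤ ∫⁻ p, (edist x₀ p.1 + edist x₀ p.2) ∂μ.prod ν :=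
        lintegral_mono fun p => edist_triangle_left _ _ _
    _ = ∫⁻ x, edist x₀ x ∂μ + ∫⁻ x, edist x₀ x ∂ν := by
        rw [lintegral_add_left (f := fun p : X × X => edist x₀ p.1) (hm.comp measurable_fst),
          measurePreserving_fst.lintegral_comp hm, measurePreserving_snd.lintegral_comp hm]

theorem lintegral_edist_le_add_eW1 (μ ν : Measure X) (x₀ : X) :
    ∫⁻ x, edist x₀ x ∂ν ≤ ∫⁻ x, edist x₀ x ∂μ + eW1 μ ν := by
  rw [eW1, ENNReal.add_iInf₂]
  refine le_iInf₂ fun γ hγ => ?_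
  obtain ⟨-, rfl, rfl⟩ := hγ
  have hm : Measurable fun x : X => edist x₀ x := by fun_prop
  rw [lintegral_map hm measurable_fst, lintegral_map hm measurable_snd,
    ← lintegral_add_left (f := fun p : X × X => edist x₀ p.1) (hm.comp measurable_fst)]
  exact lintegral_mono fun p => edist_triangle _ _ _

end FirstMoment

end ExtendedWasserstein

section Compactness

theorem measure_compl_prod_cthickening_le {X : Type*} [MeasurableSpace X] [PseudoEMetricSpace X]
    [SecondCountableTopology X] [OpensMeasurableSpace X] (γ : Measure (X × X)) (K : Set X)
    {δ : ℝ≥0} (hδ : δ ≠ 0) :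
    γ (K ×ˢ Metric.cthickening δ K)ᶜ ≤ γ.map Prod.fst Kᶜ + (∫⁻ p, edist p.1 p.2 ∂γ) / δ := by
  have hsub : (K ×ˢ Metric.cthickening δ K)ᶜ ⊆
      Prod.fst ⁻¹' Kᶜ ∪ {p : X × X | (δ : ℝ≥0∞) ≤ edist p.1 p.2} := by
    rintro ⟨x, y⟩ hxy
    by_contra! hfar
    simp only [Set.mem_union, Set.mem_preimage, Set.mem_compl_iff, Set.mem_ofPred_eq, not_or,
      not_not, not_le] at hfar
    obtain ⟨hx, hlt⟩ := hfar
    refine hxy ⟨hx, Metric.mem_cthickening_of_edist_le y x δ K hx ?_⟩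
    rw [ENNReal.ofReal_coe_nnreal, edist_comm]
    exact hlt.le
  have hedist : Measurable fun p : X × X => edist p.1 p.2 := by fun_prop
  calc γ (K ×ˢ Metric.cthickening δ K)ᶜ
      ≤ γ (Prod.fst ⁻¹' Kᶜ) + γ {p : X × X | (δ : ℝ≥0∞) ≤ edist p.1 p.2} :=
        (measure_mono hsub).trans (measure_union_le _ _)
    _ ≤ γ.map Prod.fst Kᶜ + (∫⁻ p, edist p.1 p.2 ∂γ) / δ := by
        gcongr
        · exact Measure.le_map_apply measurable_fst.aemeasurable _
        · exact meas_ge_le_lintegral_div hedist.aemeasurable (ENNReal.coe_ne_zero.2 hδ)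
            ENNReal.coe_ne_top

theorem isTightMeasureSet_map_fst_mem_lintegral_edist_le {X : Type*} [MeasurableSpace X]
    [PseudoMetricSpace X] [ProperSpace X] [OpensMeasurableSpace X] {S : Set (Measure X)}
    (hS : IsTightMeasureSet S) {b : ℝ≥0∞} (hb : b ≠ ∞) :
    IsTightMeasureSet {γ : Measure (X × X) | γ.map Prod.fst ∈ S ∧
      ∫⁻ p, edist p.1 p.2 ∂γ ≤ b} := by
  rw [isTightMeasureSet_iff_exists_isCompact_measure_compl_le] at hS ⊢
  intro ε hε
  have hε₂ : 0 < ε / 2 := ENNReal.half_pos hε.ne'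
  obtain ⟨K, hK, hSK⟩ := hS (ε / 2) hε₂
  obtain ⟨δ, hδ, -⟩ :=
    ENNReal.lt_iff_exists_nnreal_btwn.1 (ENNReal.div_lt_top hb hε₂.ne')
  have hδ₀ : (δ : ℝ≥0∞) ≠ 0 := (pos_of_gt hδ).ne'
  refine ⟨K ×ˢ Metric.cthickening δ K, hK.prod hK.cthickening, fun γ hγ => ?_⟩
  calc γ (K ×ˢ Metric.cthickening δ K)ᶜ
      ≤ γ.map Prod.fst Kᶜ + (∫⁻ p, edist p.1 p.2 ∂γ) / δ :=
        measure_compl_prod_cthickening_le γ K (ENNReal.coe_ne_zero.1 hδ₀)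
    _ ≤ ε / 2 + b / δ := by
        gcongr
        · exact hSK _ hγ.1
        · exact hγ.2
    _ ≤ ε / 2 + ε / 2 := by
        rw [ENNReal.div_lt_iff (.inl hε₂.ne') (.inr hb), mul_comm] at hδ
        exact add_le_add_right (ENNReal.div_le_of_le_mul hδ.le) _
    _ = ε := ENNReal.add_halves ε

variable {X : Type*} [MetricSpace X] [ProperSpace X] [MeasurableSpace X] [BorelSpace X]

theorem isCompact_setOf_map_fst_eq_lintegral_edist_le (μ : ProbabilityMeasure X) {b : ℝ≥0∞}
    (hb : b ≠ ∞) :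
    IsCompact {γ : ProbabilityMeasure (X × X) | γ.map measurable_fst.aemeasurable = μ ∧
      ∫⁻ p, edist p.1 p.2 ∂(γ : Measure (X × X)) ≤ b} := by
  set S := {γ : ProbabilityMeasure (X × X) | γ.map measurable_fst.aemeasurable = μ ∧
    ∫⁻ p, edist p.1 p.2 ∂(γ : Measure (X × X)) ≤ b}
  have htight : IsTightMeasureSet {(γ : Measure (X × X)) | γ ∈ S} := by
    refine (isTightMeasureSet_map_fst_mem_lintegral_edist_le
      (isTightMeasureSet_singleton (μ := (μ : Measure X))) hb).subset ?_
    rintro _ ⟨γ, hγ, rfl⟩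
    exact ⟨congrArg ProbabilityMeasure.toMeasure hγ.1, hγ.2⟩
  have hclosed : IsClosed S :=
    (isClosed_singleton.preimage (ProbabilityMeasure.continuous_map continuous_fst)).inter
      ((lowerSemicontinuous_lintegral_of_continuous continuous_edist).isClosed_preimage b)
  exact (isCompact_closure_of_isTightMeasureSet htight).of_isClosed_subset hclosed subset_closure

theorem isCompact_setOf_eW1_le (μ : Measure X) [hμ : IsProbabilityMeasure μ] {b : ℝ≥0∞}
    (hb : b ≠ ∞) : IsCompact {ν : ProbabilityMeasure X | eW1 μ ν ≤ b} := by
  let targets (c : ℝ≥0∞) : Set (ProbabilityMeasure X) :=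
    (fun γ : ProbabilityMeasure (X × X) => γ.map measurable_snd.aemeasurable) ''
      {γ | γ.map measurable_fst.aemeasurable = ⟨μ, hμ⟩ ∧
        ∫⁻ p, edist p.1 p.2 ∂(γ : Measure (X × X)) ≤ c}
  have hcompact {c : ℝ≥0∞} (hc : c ∈ Set.Ioo b ∞) : IsCompact (targets c) :=
    (isCompact_setOf_map_fst_eq_lintegral_edist_le ⟨μ, hμ⟩ hc.2.ne).image
      (ProbabilityMeasure.continuous_map continuous_snd)
  have heq : {ν : ProbabilityMeasure X | eW1 μ ν ≤ b} =
      ⋂ c ∈ Set.Ioo b ∞, targets c := by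
    ext ν
    simp only [Set.mem_ofPred_eq, eW1_le_iff_forall_exists_lintegral_edist_le, Set.mem_iInter]
    refine forall₂_congr fun c _ => ⟨?_, ?_⟩
    · rintro ⟨γ, ⟨hγ, hfst, hsnd⟩, hle⟩
      exact ⟨⟨γ, hγ⟩, ⟨Subtype.ext hfst, hle⟩, Subtype.ext hsnd⟩
    · rintro ⟨γ, ⟨hfst, hle⟩, rfl⟩
      exact ⟨γ, ⟨inferInstance, congrArg ProbabilityMeasure.toMeasure hfst, rfl⟩, hle⟩
  obtain ⟨c, hc⟩ : (Set.Ioo b ∞).Nonempty := Set.nonempty_Ioo.2 hb.lt_top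
  rw [heq]
  exact (hcompact hc).of_isClosed_subset (isClosed_biInter fun c hc => (hcompact hc).isClosed)
    (Set.biInter_subset_of_mem hc)

theorem lowerSemicontinuous_eW1 (μ : Measure X) [IsProbabilityMeasure μ] :
    LowerSemicontinuous fun ν : ProbabilityMeasure X => eW1 μ ν := by
  refine lowerSemicontinuous_iff_isClosed_preimage.2 fun b => ?_
  rcases eq_or_ne b ∞ with rfl | hb
  · simp
  · exact (isCompact_setOf_eW1_le μ hb).isClosed

end Compactness

section ExtendedDispersion

/-- The dispersion functional `μ ↦ ∑ᵢ wᵢ W₁(νᵢ, μ)` with values in `ℝ≥0∞`, for nonnegative weights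
`w` of arbitrary sum. -/
noncomputable def eMedCost {X ι : Type*} [MeasurableSpace X] [PseudoEMetricSpace X] [Fintype ι]
    (w : ι → ℝ≥0) (ν : ι → Measure X) (μ : Measure X) : ℝ≥0∞ :=
  ∑ i, w i * eW1 (ν i) μ

section Basic

variable {X ι : Type*} [MeasurableSpace X] [PseudoEMetricSpace X] [Fintype ι] {w : ι → ℝ≥0}
  {ν : ι → Measure X} {μ μ₁ μ₂ : Measure X}

theorem eW1_le_eMedCost_div {i : ι} (hi : w i ≠ 0) :
    eW1 (ν i) μ ≤ eMedCost w ν μ / w i := by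
  rw [ENNReal.le_div_iff_mul_le (.inl (ENNReal.coe_ne_zero.2 hi)) (.inl ENNReal.coe_ne_top),
    mul_comm]
  exact Finset.single_le_sum (f := fun i => w i * eW1 (ν i) μ) (fun _ _ => zero_le)
    (Finset.mem_univ i)

theorem eMedCost_smul_add_smul_le {a b : ℝ≥0} (hab : a + b = 1) :
    eMedCost w ν (a • μ₁ + b • μ₂) ≤ a * eMedCost w ν μ₁ + b * eMedCost w ν μ₂ := by
  simp only [eMedCost, Finset.mul_sum, ← Finset.sum_add_distrib]
  gcongr with i
  calc w i * eW1 (ν i) (a • μ₁ + b • μ₂)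
      = w i * eW1 (a • ν i + b • ν i) (a • μ₁ + b • μ₂) := by rw [← add_smul, hab, one_smul]
    _ ≤ w i * (a * eW1 (ν i) μ₁ + b * eW1 (ν i) μ₂) := by
        gcongr
        exact eW1_smul_add_smul_le hab
    _ = a * (w i * eW1 (ν i) μ₁) + b * (w i * eW1 (ν i) μ₂) := by ring

end Basic

variable {X ι : Type*} [MetricSpace X] [ProperSpace X] [MeasurableSpace X] [BorelSpace X]
  [Fintype ι] (ν : ι → Measure X) [∀ i, IsProbabilityMeasure (ν i)]

theorem lowerSemicontinuous_eMedCost (w : ι → ℝ≥0) :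
    LowerSemicontinuous fun μ : ProbabilityMeasure X => eMedCost w ν μ :=
  lowerSemicontinuous_sum fun i _ =>
    (ENNReal.continuous_const_mul ENNReal.coe_ne_top).comp_lowerSemicontinuous
      (lowerSemicontinuous_eW1 (ν i)) fun _ _ h => mul_le_mul_right h _

theorem isCompact_setOf_eMedCost_le {w : ι → ℝ≥0} {i : ι} (hi : w i ≠ 0) {b : ℝ≥0∞}
    (hb : b ≠ ∞) : IsCompact {μ : ProbabilityMeasure X | eMedCost w ν μ ≤ b} :=
  (isCompact_setOf_eW1_le (ν i)
    (ENNReal.div_lt_top hb (ENNReal.coe_ne_zero.2 hi)).ne).of_isClosed_subset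
      ((lowerSemicontinuous_eMedCost ν w).isClosed_preimage b) fun _ hμ =>
        (eW1_le_eMedCost_div hi).trans (ENNReal.div_le_div_right hμ _)

end ExtendedDispersion

section FiniteFirstMoment

theorem integrable_dist_iff_lintegral_edist_lt_top {X : Type*} [PseudoMetricSpace X]
    [MeasurableSpace X] [OpensMeasurableSpace X] {μ : Measure X} (x₀ : X) :
    Integrable (fun x => dist x₀ x) μ ↔ ∫⁻ x, edist x₀ x ∂μ < ∞ := by
  have hm : AEStronglyMeasurable (fun x => dist x₀ x) μ :=
    (continuous_const.dist continuous_id).aestronglyMeasurable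
  simp only [Integrable, hm, true_and, edist_dist,
    hasFiniteIntegral_iff_ofReal (ae_of_all μ fun x => (dist_nonneg : 0 ≤ dist x₀ x))]

variable {X : Type*} [MetricSpace X] [MeasurableSpace X]

theorem W1_eq_toReal_eW1 (μ ν : Measure X) : W1 μ ν = (eW1 μ ν).toReal :=
  rfl

variable [OpensMeasurableSpace X] {μ : Measure X} [IsProbabilityMeasure μ]

theorem eW1_lt_top_iff_mem_P1 {ν : Measure X} (hν : ν ∈ P1 X) : eW1 ν μ < ∞ ↔ μ ∈ P1 X := by
  have := hν.1
  have hν' (x₀ : X) := (integrable_dist_iff_lintegral_edist_lt_top x₀).1 (hν.2 x₀)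
  constructor
  · refine fun h => ⟨inferInstance, fun x₀ => ?_⟩
    exact (integrable_dist_iff_lintegral_edist_lt_top x₀).2 <|
      (lintegral_edist_le_add_eW1 ν μ x₀).trans_lt (ENNReal.add_lt_top.2 ⟨hν' x₀, h⟩)
  · intro hμ
    obtain ⟨x₀⟩ := nonempty_of_isProbabilityMeasure μ
    exact (eW1_le_lintegral_edist_add_lintegral_edist x₀).trans_lt <|
      ENNReal.add_lt_top.2
        ⟨hν' x₀, (integrable_dist_iff_lintegral_edist_lt_top x₀).1 (hμ.2 x₀)⟩

theorem eMedCost_lt_top_iff_mem_P1 {ι : Type*} [Fintype ι] {w : ι → ℝ≥0} {i : ι} (hi : w i ≠ 0)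
    {ν : ι → Measure X} (hν : ∀ i, ν i ∈ P1 X) : eMedCost w ν μ < ∞ ↔ μ ∈ P1 X := by
  refine ⟨fun h => (eW1_lt_top_iff_mem_P1 (hν i)).1 ?_, fun hμ => ?_⟩
  · exact (eW1_le_eMedCost_div hi).trans_lt
      (ENNReal.div_lt_top h.ne (ENNReal.coe_ne_zero.2 hi))
  · exact ENNReal.sum_lt_top.2 fun i _ =>
      ENNReal.mul_lt_top ENNReal.coe_lt_top ((eW1_lt_top_iff_mem_P1 (hν i)).2 hμ)

variable {N : ℕ} {w : Fin N → ℝ≥0} {ν : Fin N → Measure X}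

theorem medCost_eq_toReal_eMedCost (hν : ∀ i, ν i ∈ P1 X) {μ : Measure X} (hμ : μ ∈ P1 X) :
    medCost (fun i => (w i : ℝ)) ν μ = (eMedCost w ν μ).toReal := by
  have := hμ.1
  have hfin (i : Fin N) : w i * eW1 (ν i) μ ≠ ∞ :=
    ENNReal.mul_ne_top ENNReal.coe_ne_top ((eW1_lt_top_iff_mem_P1 (hν i)).2 hμ).ne
  simp only [medCost, eMedCost, W1_eq_toReal_eW1, ENNReal.toReal_sum fun i _ => hfin i,
    ENNReal.toReal_mul, ENNReal.coe_toReal]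

theorem mem_Med_iff_forall_eMedCost_le {i : Fin N} (hi : w i ≠ 0) (hν : ∀ i, ν i ∈ P1 X) :
    μ ∈ Med (fun i => (w i : ℝ)) ν ↔
      ∀ ρ : ProbabilityMeasure X, eMedCost w ν μ ≤ eMedCost w ν ρ := by
  constructor
  · rintro ⟨hμ, hmin⟩ ρ
    by_cases hρ : (ρ : Measure X) ∈ P1 X
    · rw [← ENNReal.toReal_le_toReal ((eMedCost_lt_top_iff_mem_P1 hi hν).2 hμ).ne
        ((eMedCost_lt_top_iff_mem_P1 hi hν).2 hρ).ne, ← medCost_eq_toReal_eMedCost hν hμ,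
        ← medCost_eq_toReal_eMedCost hν hρ]
      exact hmin ρ hρ
    · rw [← eMedCost_lt_top_iff_mem_P1 hi hν, not_lt_top_iff] at hρ
      exact hρ ▸ le_top
  · intro hmin
    have hfin {ρ : Measure X} (hρ : ρ ∈ P1 X) : eMedCost w ν ρ < ∞ :=
      have := hρ.1
      (eMedCost_lt_top_iff_mem_P1 hi hν).2 hρ
    have hμ : μ ∈ P1 X := (eMedCost_lt_top_iff_mem_P1 hi hν).1 <|
      (hmin ⟨ν i, (hν i).1⟩).trans_lt (hfin (hν i))
    refine ⟨hμ, fun ρ hρ => ?_⟩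
    rw [medCost_eq_toReal_eMedCost hν hμ, medCost_eq_toReal_eMedCost hν hρ]
    exact ENNReal.toReal_mono (hfin hρ).ne (hmin ⟨ρ, hρ.1⟩)

theorem smul_add_smul_mem_Med {i : Fin N} (hi : w i ≠ 0) (hν : ∀ i, ν i ∈ P1 X)
    {μ₁ μ₂ : Measure X} (h₁ : μ₁ ∈ Med (fun i => (w i : ℝ)) ν)
    (h₂ : μ₂ ∈ Med (fun i => (w i : ℝ)) ν) {a b : ℝ≥0} (hab : a + b = 1) :
    a • μ₁ + b • μ₂ ∈ Med (fun i => (w i : ℝ)) ν := by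
  have := h₁.1.1
  have := h₂.1.1
  have := isProbabilityMeasure_smul_add_smul (μ₁ := μ₁) (μ₂ := μ₂) hab
  rw [mem_Med_iff_forall_eMedCost_le hi hν] at h₁ h₂ ⊢
  intro ρ
  calc eMedCost w ν (a • μ₁ + b • μ₂) ≤ a * eMedCost w ν μ₁ + b * eMedCost w ν μ₂ :=
        eMedCost_smul_add_smul_le hab
    _ ≤ a * eMedCost w ν ρ + b * eMedCost w ν ρ := by
        gcongr
        exacts [h₁ ρ, h₂ ρ]
    _ = eMedCost w ν ρ := by rw [← add_mul, ← ENNReal.coe_add, hab, ENNReal.coe_one, one_mul]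

end FiniteFirstMoment

/-- On a proper metric space, the dispersion functional
`μ ↦ ∑ᵢ λᵢ W₁(νᵢ, μ)` attains its minimum over `𝒫₁(X)`, and the set of Wasserstein
medians is nonempty, convex, and narrowly compact (compact in the topology of
weak convergence of probability measures). -/
theorem wassersteinMedian_exists_convex_narrowlyCompact
    {X : Type*} [MetricSpace X] [ProperSpace X] [MeasurableSpace X] [BorelSpace X]
    {N : ℕ} (hN : 1 ≤ N) {l : Fin N → ℝ} (hl : memSimplex l)
    {ν : Fin N → Measure X} (hν : ∀ i, ν i ∈ P1 X) :
    (Med l ν).Nonempty ∧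
      (∀ μ₁ ∈ Med l ν, ∀ μ₂ ∈ Med l ν, ∀ t : ℝ≥0, t ≤ 1 →
        (t • μ₁ + (1 - t) • μ₂ : Measure X) ∈ Med l ν) ∧
      IsCompact {μ : ProbabilityMeasure X | (μ : Measure X) ∈ Med l ν} := by
  obtain ⟨hl₀, hl₁⟩ := hl
  lift l to Fin N → ℝ≥0 using hl₀
  obtain ⟨i, -, hi⟩ : ∃ i ∈ Finset.univ, (l i : ℝ) ≠ 0 :=
    Finset.exists_ne_zero_of_sum_ne_zero (hl₁ ▸ one_ne_zero)
  replace hi : l i ≠ 0 := NNReal.coe_ne_zero.1 hi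
  have hprob (i : Fin N) : IsProbabilityMeasure (ν i) := (hν i).1
  have hmed (μ : ProbabilityMeasure X) := mem_Med_iff_forall_eMedCost_le (μ := μ) hi hν
  have hlsc := lowerSemicontinuous_eMedCost ν l
  have hcompact : IsCompact {μ : ProbabilityMeasure X |
      eMedCost l ν μ ≤ eMedCost l ν (⟨ν i, hprob i⟩ : ProbabilityMeasure X)} :=
    isCompact_setOf_eMedCost_le ν hi ((eMedCost_lt_top_iff_mem_P1 hi hν).2 (hν i)).ne
  refine ⟨?_, fun μ₁ h₁ μ₂ h₂ t ht => ?_, ?_⟩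
  · obtain ⟨μ, hμ⟩ := exists_forall_le_of_isCompact_setOf_le hlsc hcompact
    exact ⟨μ, (hmed μ).2 hμ⟩
  · exact smul_add_smul_mem_Med hi hν h₁ h₂ (add_tsub_cancel_of_le ht)
  · simp only [hmed]
    exact isCompact_setOf_forall_le hlsc hcompact
end

section
/- Let (X,d) be a proper metric space, N ≥ 1, (λ,ν) ∈ Δ_N × 𝒫₁(X)^N, and let (λⁿ,νⁿ) be a sequence in Δ_N × 𝒫₁(X)^N with ∑ᵢ |λᵢⁿ − λᵢ| + maxᵢ W₁(νᵢⁿ,νᵢ) → 0. If μⁿ ∈ Med_{λⁿ}(νⁿ) for all n, then (μⁿ) admits a subsequence converging in W₁ distance to some μ ∈ Med_λ(ν). In particular Med_λ(ν) is compact for the W₁ distance, and the set-valued map (λ,ν) ↦ Med_λ(ν) has a closed graph for the W₁ distance. -/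
open MeasureTheory Filter Topology
open scoped ENNReal NNReal

/-!
Medians of converging data stay at bounded distance from each `νᵢ`, so on a proper space they
converge weakly along a subsequence to some `μ`, with `W₁(νᵢ, μⁿ) → cᵢ`. Lower semicontinuity gives
`W₁(νᵢ, μ) ≤ cᵢ`, while minimality of `μⁿ` gives `∑ᵢ λᵢ cᵢ ≤ ∑ᵢ λᵢ W₁(νᵢ, ρ)` for every `ρ`. With
`ρ = μ` this forces `W₁(νᵢ, μⁿ) → W₁(νᵢ, μ)` for any `i` with `λᵢ ≠ 0`. A single such `i` upgrades
weak convergence to convergence in `W₁`: optimal couplings of `νᵢ` and `μⁿ` converge weakly to an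
optimal one without loss of cost, so the moments of `μⁿ`, dominated along the couplings by
`d(x₀, x) + d(x, y)`, converge.

That weak convergence and convergence of first moments imply `W₁` convergence is proved by
quantization: a soft nearest-point projection onto a finite set moves each measure by the integral
of a continuous function of linear growth, and turns weak convergence into convergence of finitely
many weights.
-/

open ProbabilityTheory

/-- The extended Wasserstein distance of order `1`, before `ENNReal.toReal` sends an infinite
value to `0`: the triangle inequality and lower semicontinuity hold for it unconditionally. -/
noncomputable def W1e {X : Type*} [MetricSpace X] [MeasurableSpace X] (μ ν : Measure X) : ℝ≥0∞ :=
  ⨅ γ ∈ Couplings μ ν, ∫⁻ p, edist p.1 p.2 ∂γ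

section WeakConvergence

lemma tendsto_of_tendsto_add_of_le_liminf {ι : Type*} {F : Filter ι} {a b : ι → ℝ≥0∞}
    {A B : ℝ≥0∞} (hAB : A + B ≠ ∞) (h : Tendsto (fun n => a n + b n) F (𝓝 (A + B)))
    (hA : A ≤ liminf a F) (hB : B ≤ liminf b F) : Tendsto a F (𝓝 A) := by
  obtain ⟨-, hB_top⟩ := ENNReal.add_ne_top.1 hAB
  have hmin : Tendsto (fun n => min (b n) B) F (𝓝 B) := by
    refine tendsto_order.2 ⟨fun c hc => ?_, fun c hc => .of_forall fun n => min_lt_of_right_lt hc⟩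
    exact (eventually_lt_of_lt_liminf (hc.trans_le hB)).mono fun n hn => lt_min hn hc
  have hupper : Tendsto (fun n => a n + b n - min (b n) B) F (𝓝 A) := by
    simpa only [ENNReal.add_sub_cancel_right hB_top] using ENNReal.Tendsto.sub h hmin (.inr hB_top)
  have hle : ∀ n, a n ≤ a n + b n - min (b n) B := fun n =>
    ENNReal.le_sub_of_add_le_right (ne_top_of_le_ne_top hB_top (min_le_right _ _))
      (add_le_add_right (min_le_left _ _) _)
  refine tendsto_order.2 ⟨fun c hc => eventually_lt_of_lt_liminf (hc.trans_le hA), fun c hc => ?_⟩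
  exact (hupper.eventually_lt_const hc).mono fun n hn => (hle n).trans_lt hn

variable {Y : Type*} [TopologicalSpace Y] [HasOuterApproxClosed Y] [MeasurableSpace Y]
  [OpensMeasurableSpace Y] {P : ℕ → ProbabilityMeasure Y} {Q : ProbabilityMeasure Y}

lemma lintegral_le_liminf_of_tendsto (h : Tendsto P atTop (𝓝 Q)) {f : Y → ℝ≥0}
    (hf : Continuous f) :
    ∫⁻ y, f y ∂(Q : Measure Y) ≤ liminf (fun n => ∫⁻ y, f y ∂(P n : Measure Y)) atTop := by
  simpa using lintegral_le_liminf_lintegral_of_forall_isOpen_measure_le_liminf_measure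
    (f := fun y => (f y : ℝ)) (by fun_prop) (fun y => (f y).coe_nonneg)
    fun _ => ProbabilityMeasure.le_liminf_measure_open_of_tendsto h

lemma tendsto_lintegral_of_le (h : Tendsto P atTop (𝓝 Q)) {f g : Y → ℝ≥0} (hf : Continuous f)
    (hg : Continuous g) (hfg : f ≤ g) (hQ : ∫⁻ y, g y ∂(Q : Measure Y) ≠ ∞)
    (hlim : Tendsto (fun n => ∫⁻ y, g y ∂(P n : Measure Y)) atTop
      (𝓝 (∫⁻ y, g y ∂(Q : Measure Y)))) :
    Tendsto (fun n => ∫⁻ y, f y ∂(P n : Measure Y)) atTop (𝓝 (∫⁻ y, f y ∂(Q : Measure Y))) := by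
  have hsplit (μ : Measure Y) :
      ∫⁻ y, g y ∂μ = ∫⁻ y, f y ∂μ + ∫⁻ y, (g y - f y : ℝ≥0) ∂μ := by
    rw [← lintegral_add_left (by fun_prop)]
    exact lintegral_congr fun y => by rw [← ENNReal.coe_add, add_tsub_cancel_of_le (hfg y)]
  simp only [hsplit] at hQ hlim
  exact tendsto_of_tendsto_add_of_le_liminf hQ hlim (lintegral_le_liminf_of_tendsto h hf)
    (lintegral_le_liminf_of_tendsto h (hg.sub hf))

end WeakConvergence

section Couplings

variable {X : Type*} [MeasurableSpace X] {μ ν : Measure X} {γ : Measure (X × X)}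

lemma mem_couplings_of_fst_of_snd [IsProbabilityMeasure μ] (hfst : γ.fst = μ) (hsnd : γ.snd = ν) :
    γ ∈ Couplings μ ν :=
  ⟨⟨by rw [← Measure.fst_univ, hfst, measure_univ]⟩, hfst, hsnd⟩

lemma isProbabilityMeasure_left_of_mem_couplings (hγ : γ ∈ Couplings μ ν) :
    IsProbabilityMeasure μ :=
  have := hγ.1
  hγ.2.1 ▸ Measure.isProbabilityMeasure_map measurable_fst.aemeasurable

lemma map_swap_mem_couplings (hγ : γ ∈ Couplings μ ν) : γ.map Prod.swap ∈ Couplings ν μ :=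
  ⟨have := hγ.1; Measure.isProbabilityMeasure_map measurable_swap.aemeasurable,
    Measure.fst_map_swap.trans hγ.2.2, Measure.snd_map_swap.trans hγ.2.1⟩

lemma lintegral_fst_of_mem_couplings (hγ : γ ∈ Couplings μ ν) {f : X → ℝ≥0∞} (hf : Measurable f) :
    ∫⁻ p, f p.1 ∂γ = ∫⁻ x, f x ∂μ := by
  rw [← hγ.2.1, lintegral_map hf measurable_fst]

lemma lintegral_snd_of_mem_couplings (hγ : γ ∈ Couplings μ ν) {f : X → ℝ≥0∞} (hf : Measurable f) :
    ∫⁻ p, f p.2 ∂γ = ∫⁻ x, f x ∂ν := by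
  rw [← hγ.2.2, lintegral_map hf measurable_snd]

end Couplings

section Gluing

variable {α β δ : Type*} [MeasurableSpace α] [MeasurableSpace β] [MeasurableSpace δ]

lemma exists_gluing [StandardBorelSpace α] [Nonempty α] [StandardBorelSpace δ] [Nonempty δ]
    {γ : Measure (β × α)} {γ' : Measure (β × δ)} [IsFiniteMeasure γ] [IsFiniteMeasure γ']
    (h : γ.fst = γ'.fst) :
    ∃ θ : Measure (β × α × δ),
      θ.map (Prod.map id Prod.fst) = γ ∧ θ.map (Prod.map id Prod.snd) = γ' := by
  refine ⟨γ.fst ⊗ₘ (γ.condKernel ×ₖ γ'.condKernel), ?_, ?_⟩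
  · rw [← Measure.compProd_map measurable_fst, ← Kernel.fst_eq, Kernel.fst_prod,
      γ.disintegrate]
  · rw [← Measure.compProd_map measurable_snd, ← Kernel.snd_eq, Kernel.snd_prod, h,
      γ'.disintegrate]

lemma inv_measure_univ_smul_smul (μ : Measure α) [IsFiniteMeasure μ] :
    (μ Set.univ)⁻¹ • μ Set.univ • μ = μ := by
  rcases eq_zero_or_neZero μ with rfl | _
  · rw [smul_zero, smul_zero]
  · rw [smul_smul, ENNReal.inv_mul_cancel (NeZero.ne _) (measure_ne_top _ _), one_smul]

lemma exists_fst_eq_snd_eq (μ : Measure α) (ν : Measure β) [IsFiniteMeasure μ] [IsFiniteMeasure ν]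
    (h : μ Set.univ = ν Set.univ) : ∃ π : Measure (α × β), π.fst = μ ∧ π.snd = ν := by
  refine ⟨(μ Set.univ)⁻¹ • μ.prod ν, ?_, ?_⟩
  · rw [Measure.fst, Measure.map_smul, Measure.map_fst_prod, ← h, inv_measure_univ_smul_smul]
  · rw [Measure.snd, Measure.map_smul, Measure.map_snd_prod, h, inv_measure_univ_smul_smul]

end Gluing

section Distance

variable {X : Type*} [MetricSpace X] [MeasurableSpace X] {μ ν ρ : Measure X}

lemma W1e_le_of_mem_couplings {γ : Measure (X × X)} (hγ : γ ∈ Couplings μ ν) :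
    W1e μ ν ≤ ∫⁻ p, edist p.1 p.2 ∂γ :=
  iInf₂_le γ hγ

lemma W1_nonneg (μ ν : Measure X) : 0 ≤ W1 μ ν := ENNReal.toReal_nonneg

variable [BorelSpace X]

lemma moment_le_add_W1e (x₀ : X) (μ ν : Measure X) :
    ∫⁻ x, edist x₀ x ∂ν ≤ ∫⁻ x, edist x₀ x ∂μ + W1e μ ν := by
  rw [W1e, ENNReal.add_iInf₂]
  refine le_iInf₂ fun γ hγ => ?_
  rw [← lintegral_snd_of_mem_couplings hγ (by fun_prop),
    ← lintegral_fst_of_mem_couplings hγ (by fun_prop), ← lintegral_add_left (by fun_prop)]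
  exact lintegral_mono fun p => edist_triangle _ _ _

lemma mem_P1_iff (x₀ : X) [IsProbabilityMeasure μ] :
    μ ∈ P1 X ↔ ∫⁻ x, edist x₀ x ∂μ ≠ ∞ := by
  have integrable_iff (x : X) : Integrable (dist x) μ ↔ ∫⁻ y, edist x y ∂μ ≠ ∞ := by
    rw [Integrable, and_iff_right (by fun_prop),
      hasFiniteIntegral_iff_ofReal (ae_of_all _ fun _ => dist_nonneg), lt_top_iff_ne_top]
    simp only [edist_dist]
  refine ⟨fun h => (integrable_iff x₀).1 (h.2 x₀),
    fun h => ⟨inferInstance, fun x => (integrable_iff x).2 ?_⟩⟩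
  refine ne_top_of_le_ne_top (ENNReal.add_ne_top.2 ⟨edist_ne_top x x₀, h⟩) ?_
  calc ∫⁻ y, edist x y ∂μ ≤ ∫⁻ y, edist x x₀ + edist x₀ y ∂μ :=
        lintegral_mono fun y => edist_triangle _ _ _
    _ = edist x x₀ + ∫⁻ y, edist x₀ y ∂μ := by
        rw [lintegral_add_left (by fun_prop), lintegral_const, measure_univ, mul_one]

lemma lintegral_edist_le (x₀ : X) (γ : Measure (X × X)) :
    ∫⁻ p, edist p.1 p.2 ∂γ ≤ ∫⁻ x, edist x₀ x ∂γ.fst + ∫⁻ x, edist x₀ x ∂γ.snd := by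
  rw [Measure.fst, Measure.snd, lintegral_map (by fun_prop) measurable_fst,
    lintegral_map (by fun_prop) measurable_snd, ← lintegral_add_left (by fun_prop)]
  exact lintegral_mono fun p => edist_triangle_left _ _ _

variable [SecondCountableTopology X]

lemma W1e_comm (μ ν : Measure X) : W1e μ ν = W1e ν μ := by
  have W1e_le (μ ν : Measure X) : W1e μ ν ≤ W1e ν μ := le_iInf₂ fun γ hγ => by
    refine (W1e_le_of_mem_couplings (map_swap_mem_couplings hγ)).trans_eq ?_
    rw [lintegral_map (by fun_prop) measurable_swap]
    simp only [Prod.fst_swap, Prod.snd_swap, edist_comm]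
  exact (W1e_le μ ν).antisymm (W1e_le ν μ)

lemma W1e_le_add_of_mem_couplings [CompleteSpace X] {γ γ' : Measure (X × X)}
    (hγ : γ ∈ Couplings μ ν) (hγ' : γ' ∈ Couplings ν ρ) :
    W1e μ ρ ≤ ∫⁻ p, edist p.1 p.2 ∂γ + ∫⁻ p, edist p.1 p.2 ∂γ' := by
  have hswap := map_swap_mem_couplings hγ
  have := hswap.1
  have := hγ'.1
  have := isProbabilityMeasure_left_of_mem_couplings hγ
  have := nonempty_of_isProbabilityMeasure μ
  obtain ⟨θ, hθ, hθ'⟩ := exists_gluing (hswap.2.1.trans hγ'.2.1.symm)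
  have hcoupling : θ.map Prod.snd ∈ Couplings μ ρ := by
    refine mem_couplings_of_fst_of_snd ?_ ?_
    · rw [← hswap.2.2, ← hθ, Measure.map_map (by fun_prop) (by fun_prop), Measure.fst,
        Measure.map_map (by fun_prop) (by fun_prop)]
      rfl
    · rw [← hγ'.2.2, ← hθ', Measure.map_map (by fun_prop) (by fun_prop), Measure.snd,
        Measure.map_map (by fun_prop) (by fun_prop)]
      rfl
  calc W1e μ ρ ≤ ∫⁻ q, edist q.2.1 q.2.2 ∂θ := by
        rw [← lintegral_map (f := fun p : X × X => edist p.1 p.2) (by fun_prop) measurable_snd]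
        exact W1e_le_of_mem_couplings hcoupling
    _ ≤ ∫⁻ q, edist q.1 q.2.1 + edist q.1 q.2.2 ∂θ :=
        lintegral_mono fun q => edist_triangle_left _ _ _
    _ = ∫⁻ p, edist p.1 p.2 ∂γ.map Prod.swap + ∫⁻ p, edist p.1 p.2 ∂γ' := by
        rw [lintegral_add_left (by fun_prop), ← hθ, ← hθ', lintegral_map (by fun_prop)
          (by fun_prop), lintegral_map (by fun_prop) (by fun_prop)]
        rfl
    _ = ∫⁻ p, edist p.1 p.2 ∂γ + ∫⁻ p, edist p.1 p.2 ∂γ' := by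
        rw [lintegral_map (by fun_prop) measurable_swap]
        simp only [Prod.fst_swap, Prod.snd_swap, edist_comm]

lemma W1e_triangle [CompleteSpace X] (μ ν ρ : Measure X) : W1e μ ρ ≤ W1e μ ν + W1e ν ρ := by
  rw [W1e.eq_def μ ν, W1e.eq_def ν ρ, ENNReal.iInf₂_add]
  refine le_iInf₂ fun γ hγ => ?_
  rw [ENNReal.add_iInf₂]
  exact le_iInf₂ fun γ' hγ' => W1e_le_add_of_mem_couplings hγ hγ'

lemma W1e_comp_le (μ : Measure X) [IsProbabilityMeasure μ] (κ : Kernel X X) [IsMarkovKernel κ] :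
    W1e μ (κ ∘ₘ μ) ≤ ∫⁻ x, ∫⁻ y, edist x y ∂κ x ∂μ := by
  rw [← Measure.lintegral_compProd (f := fun p : X × X => edist p.1 p.2) (by fun_prop)]
  exact W1e_le_of_mem_couplings
    (mem_couplings_of_fst_of_snd (Measure.fst_compProd μ κ) (Measure.snd_compProd μ κ))

lemma W1e_self (μ : Measure X) [IsProbabilityMeasure μ] : W1e μ μ = 0 := by
  simpa [Kernel.id_apply] using W1e_comp_le μ Kernel.id

lemma W1e_add_le (x₀ : X) (η α β : Measure X) [IsFiniteMeasure η] [IsProbabilityMeasure (η + α)]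
    [IsProbabilityMeasure (η + β)] :
    W1e (η + α) (η + β) ≤ ∫⁻ x, edist x₀ x ∂α + ∫⁻ x, edist x₀ x ∂β := by
  have : IsFiniteMeasure α := isFiniteMeasure_of_le (η + α) (Measure.le_add_left le_rfl)
  have : IsFiniteMeasure β := isFiniteMeasure_of_le (η + β) (Measure.le_add_left le_rfl)
  have hmass : α Set.univ = β Set.univ := by
    rw [← ENNReal.add_right_inj (measure_ne_top η Set.univ), ← Measure.add_apply,
      ← Measure.add_apply, measure_univ, measure_univ]
  obtain ⟨π, hα, hβ⟩ := exists_fst_eq_snd_eq α β hmass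
  have hdiag : Measurable fun x : X => (x, x) := by fun_prop
  have hcoupling : η.map (fun x => (x, x)) + π ∈ Couplings (η + α) (η + β) := by
    refine mem_couplings_of_fst_of_snd ?_ ?_
    · rw [Measure.fst_add, Measure.fst_map_prodMk measurable_id', Measure.map_id', hα]
    · rw [Measure.snd_add, Measure.snd_map_prodMk measurable_id', Measure.map_id', hβ]
  calc W1e (η + α) (η + β) ≤ ∫⁻ p, edist p.1 p.2 ∂(η.map (fun x => (x, x)) + π) :=
        W1e_le_of_mem_couplings hcoupling
    _ = ∫⁻ p, edist p.1 p.2 ∂π := by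
        rw [lintegral_add_measure, lintegral_map (by fun_prop) hdiag]
        simp only [edist_self, lintegral_zero, zero_add]
    _ ≤ ∫⁻ x, edist x₀ x ∂α + ∫⁻ x, edist x₀ x ∂β := hα ▸ hβ ▸ lintegral_edist_le x₀ π

lemma W1e_ne_top (hμ : μ ∈ P1 X) (hν : ν ∈ P1 X) : W1e μ ν ≠ ∞ := by
  have := hμ.1
  have := hν.1
  obtain ⟨x₀⟩ := nonempty_of_isProbabilityMeasure μ
  have hcost := (W1e_le_of_mem_couplings (mem_couplings_of_fst_of_snd
    Measure.fst_prod Measure.snd_prod)).trans (lintegral_edist_le x₀ (μ.prod ν))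
  rw [Measure.fst_prod, Measure.snd_prod] at hcost
  exact ne_top_of_le_ne_top
    (ENNReal.add_ne_top.2 ⟨(mem_P1_iff x₀).1 hμ, (mem_P1_iff x₀).1 hν⟩) hcost

lemma ofReal_W1 (hμ : μ ∈ P1 X) (hν : ν ∈ P1 X) : ENNReal.ofReal (W1 μ ν) = W1e μ ν :=
  ENNReal.ofReal_toReal (W1e_ne_top hμ hν)

lemma W1_self (μ : Measure X) [IsProbabilityMeasure μ] : W1 μ μ = 0 :=
  congrArg ENNReal.toReal (W1e_self μ)

lemma W1_comm (μ ν : Measure X) : W1 μ ν = W1 ν μ :=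
  congrArg ENNReal.toReal (W1e_comm μ ν)

lemma W1_triangle [CompleteSpace X] (hμ : μ ∈ P1 X) (hν : ν ∈ P1 X) (hρ : ρ ∈ P1 X) :
    W1 μ ρ ≤ W1 μ ν + W1 ν ρ := by
  rw [← ENNReal.ofReal_le_ofReal_iff (add_nonneg (W1_nonneg _ _) (W1_nonneg _ _)),
    ENNReal.ofReal_add (W1_nonneg _ _) (W1_nonneg _ _), ofReal_W1 hμ hρ, ofReal_W1 hμ hν,
    ofReal_W1 hν hρ]
  exact W1e_triangle μ ν ρ

lemma tendsto_W1_of_tendsto [CompleteSpace X] {ι : Type*} {F : Filter ι} {μs νs : ι → Measure X}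
    {c : ℝ} (hμs : ∀ n, μs n ∈ P1 X) (hνs : ∀ n, νs n ∈ P1 X) (hν : ν ∈ P1 X)
    (h : Tendsto (fun n => W1 (νs n) ν) F (𝓝 0)) (hc : Tendsto (fun n => W1 ν (μs n)) F (𝓝 c)) :
    Tendsto (fun n => W1 (νs n) (μs n)) F (𝓝 c) := by
  have hlower : Tendsto (fun n => W1 ν (μs n) - W1 (νs n) ν) F (𝓝 c) := by
    simpa only [sub_zero] using hc.sub h
  have hupper : Tendsto (fun n => W1 (νs n) ν + W1 ν (μs n)) F (𝓝 c) := by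
    simpa only [zero_add] using h.add hc
  refine tendsto_of_tendsto_of_tendsto_of_le_of_le hlower hupper (fun n => ?_)
    fun n => W1_triangle (hνs n) hν (hμs n)
  rw [W1_comm (νs n) ν]
  exact sub_le_iff_le_add'.2 (W1_triangle hν (hνs n) (hμs n))

end Distance

section Quantization

variable {X : Type*} [MetricSpace X]

/-- The weight of `a` at `x` for a soft nearest-point projection onto the finite set `s`, with
tolerance `ε`. The truncated subtraction of `ℝ≥0` makes the unnormalized weight
`Metric.infNndist x s + ε - nndist x a` vanish when `a` is not nearly closest to `x`. -/
noncomputable def softProjWeight (s : Finset X) (ε : ℝ≥0) (a x : X) : ℝ≥0 :=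
  (Metric.infNndist x s + ε - nndist x a) / ∑ b ∈ s, (Metric.infNndist x s + ε - nndist x b)

variable {s : Finset X} {ε : ℝ≥0}

lemma sum_infNndist_add_sub_nndist_ne_zero (hs : s.Nonempty) (hε : ε ≠ 0) (x : X) :
    ∑ b ∈ s, (Metric.infNndist x s + ε - nndist x b) ≠ 0 := by
  obtain ⟨a, ha, hxa⟩ := s.finite_toSet.isCompact.exists_infDist_eq_dist hs x
  have hnn : Metric.infNndist x s = nndist x a := NNReal.eq hxa
  refine (Finset.sum_pos' (fun _ _ => zero_le) ⟨a, ha, ?_⟩).ne'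
  rw [hnn, add_tsub_cancel_left]
  exact pos_iff_ne_zero.2 hε

lemma sum_softProjWeight (hs : s.Nonempty) (hε : ε ≠ 0) (x : X) :
    ∑ a ∈ s, softProjWeight s ε a x = 1 := by
  simp only [softProjWeight]
  rw [← Finset.sum_div, div_self (sum_infNndist_add_sub_nndist_ne_zero hs hε x)]

lemma continuous_softProjWeight (hs : s.Nonempty) (hε : ε ≠ 0) (a : X) :
    Continuous (softProjWeight s ε a) := by
  have := Metric.continuous_infNndist_pt (s : Set X)
  exact Continuous.div₀ (by fun_prop) (by fun_prop) (sum_infNndist_add_sub_nndist_ne_zero hs hε)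

lemma sum_softProjWeight_mul_nndist_le (hs : s.Nonempty) (hε : ε ≠ 0) (x : X) :
    ∑ a ∈ s, softProjWeight s ε a x * nndist x a ≤ Metric.infNndist x s + ε := by
  calc ∑ a ∈ s, softProjWeight s ε a x * nndist x a
      ≤ ∑ a ∈ s, softProjWeight s ε a x * (Metric.infNndist x s + ε) := by
        refine Finset.sum_le_sum fun a _ => ?_
        rcases le_total (nndist x a) (Metric.infNndist x s + ε) with h | h
        · gcongr
        · rw [softProjWeight, tsub_eq_zero_of_le h, zero_div, zero_mul, zero_mul]
    _ = Metric.infNndist x s + ε := by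
        rw [← Finset.sum_mul, sum_softProjWeight hs hε, one_mul]

variable [MeasurableSpace X] {P : ℕ → ProbabilityMeasure X} {Q : ProbabilityMeasure X} {x₀ : X}

lemma exists_finset_lintegral_infEDist_lt [OpensMeasurableSpace X] [SecondCountableTopology X]
    (x₀ : X) {μ : Measure X} (hμ : ∫⁻ x, edist x₀ x ∂μ ≠ ∞) {δ : ℝ≥0∞} (hδ : δ ≠ 0) :
    ∃ s : Finset X, x₀ ∈ s ∧ ∫⁻ x, Metric.infEDist x s ∂μ < δ := by
  have : Nonempty X := ⟨x₀⟩
  let e := TopologicalSpace.denseSeq X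
  let t (n : ℕ) : Set X := insert x₀ (e '' Set.Iio n)
  have hlim : Tendsto (fun n => ∫⁻ x, Metric.infEDist x (t n) ∂μ) atTop (𝓝 (∫⁻ _, 0 ∂μ)) := by
    refine tendsto_lintegral_of_dominated_convergence _ (fun n => by fun_prop)
      (fun n => ae_of_all _ fun x => ?_) hμ (ae_of_all _ fun x => ?_)
    · rw [edist_comm]
      exact Metric.infEDist_le_edist_of_mem (Set.mem_insert _ _)
    · refine ENNReal.tendsto_nhds_zero.2 fun r hr => ?_
      obtain ⟨_, ⟨k, rfl⟩, hk⟩ :=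
        EMetric.mem_closure_iff.1 (TopologicalSpace.denseRange_denseSeq X x) r hr
      filter_upwards [eventually_gt_atTop k] with n hn
      exact (Metric.infEDist_le_edist_of_mem
        (Set.mem_insert_of_mem _ (Set.mem_image_of_mem e (Set.mem_Iio.2 hn)))).trans hk.le
  rw [lintegral_zero] at hlim
  obtain ⟨n, hn⟩ := (hlim.eventually_lt_const hδ.pos).exists
  have hfin : (t n).Finite := ((Set.finite_Iio n).image e).insert x₀
  exact ⟨hfin.toFinset, by simp [t], by simpa using hn⟩

/-- The soft nearest-point projection onto the finite set `s` with tolerance `ε`, as a kernel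
whose values are supported on `s`. -/
noncomputable def softProj [OpensMeasurableSpace X] (s : Finset X) (ε : ℝ≥0) : Kernel X X where
  toFun x := ∑ a ∈ s, (softProjWeight s ε a x : ℝ≥0∞) • Measure.dirac a
  measurable' := by
    refine Measure.measurable_of_measurable_coe _ fun t _ => ?_
    simp only [Measure.finsetSum_apply, Measure.smul_apply, smul_eq_mul, softProjWeight]
    fun_prop

section SoftProj

variable [OpensMeasurableSpace X]

lemma isMarkovKernel_softProj (hs : s.Nonempty) (hε : ε ≠ 0) : IsMarkovKernel (softProj s ε) where
  isProbabilityMeasure x := ⟨by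
    simp only [softProj, Kernel.coe_mk, Measure.finsetSum_apply, Measure.smul_apply, measure_univ,
      smul_eq_mul, mul_one]
    exact_mod_cast sum_softProjWeight hs hε x⟩

lemma softProj_comp (hs : s.Nonempty) (hε : ε ≠ 0) (μ : Measure X) :
    softProj s ε ∘ₘ μ = ∑ a ∈ s, (∫⁻ x, softProjWeight s ε a x ∂μ) • Measure.dirac a := by
  ext t ht
  have hw (a : X) := continuous_softProjWeight hs hε a
  rw [Measure.bind_apply ht (softProj s ε).aemeasurable]
  simp only [softProj, Kernel.coe_mk, Measure.finsetSum_apply, Measure.smul_apply, smul_eq_mul]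
  rw [lintegral_finsetSum _ fun a _ => by fun_prop]
  exact Finset.sum_congr rfl fun a _ => lintegral_mul_const _ (by fun_prop)

lemma lintegral_edist_softProj (x : X) :
    ∫⁻ y, edist x y ∂softProj s ε x =
      (∑ a ∈ s, softProjWeight s ε a x * nndist x a : ℝ≥0) := by
  simp only [softProj, Kernel.coe_mk, lintegral_finsetSum_measure, lintegral_smul_measure,
    lintegral_dirac, edist_nndist, smul_eq_mul, ENNReal.ofNNReal_finsetSum, ENNReal.coe_mul]

lemma tendsto_lintegral_softProj (h : Tendsto P atTop (𝓝 Q))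
    (hQ : ∫⁻ x, edist x₀ x ∂(Q : Measure X) ≠ ∞)
    (hmoment : Tendsto (fun n => ∫⁻ x, edist x₀ x ∂(P n : Measure X)) atTop
      (𝓝 (∫⁻ x, edist x₀ x ∂(Q : Measure X)))) (hs : x₀ ∈ s) (hε : ε ≠ 0) :
    Tendsto (fun n => ∫⁻ x, ∫⁻ y, edist x y ∂softProj s ε x ∂(P n : Measure X)) atTop
      (𝓝 (∫⁻ x, ∫⁻ y, edist x y ∂softProj s ε x ∂(Q : Measure X))) := by
  have hw (a : X) := continuous_softProjWeight ⟨x₀, hs⟩ hε a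
  have hle (x : X) : ∑ a ∈ s, softProjWeight s ε a x * nndist x a ≤ nndist x₀ x + ε := by
    refine (sum_softProjWeight_mul_nndist_le ⟨x₀, hs⟩ hε x).trans (add_le_add_left ?_ ε)
    rw [nndist_comm]
    exact Metric.infDist_le_dist_of_mem hs
  have hint (μ : ProbabilityMeasure X) :
      ∫⁻ x, (nndist x₀ x + ε : ℝ≥0) ∂(μ : Measure X) = ∫⁻ x, edist x₀ x ∂(μ : Measure X) + ε := by
    simp only [ENNReal.coe_add, ← edist_nndist]
    rw [lintegral_add_left (by fun_prop), lintegral_const, measure_univ, mul_one]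
  simp only [lintegral_edist_softProj]
  refine tendsto_lintegral_of_le h (by fun_prop) (by fun_prop) hle ?_ ?_
  · rw [hint]
    exact ENNReal.add_ne_top.2 ⟨hQ, ENNReal.coe_ne_top⟩
  · simp only [hint]
    exact hmoment.add tendsto_const_nhds

lemma exists_softProj_lintegral_lt [SecondCountableTopology X] (x₀ : X) (μ : Measure X)
    [IsProbabilityMeasure μ] (hμ : ∫⁻ x, edist x₀ x ∂μ ≠ ∞) {δ : ℝ≥0∞} (hδ : δ ≠ 0) :
    ∃ (s : Finset X) (ε : ℝ≥0), x₀ ∈ s ∧ ε ≠ 0 ∧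
      ∫⁻ x, ∫⁻ y, edist x y ∂softProj s ε x ∂μ < δ := by
  obtain ⟨s, hs, hlt⟩ := exists_finset_lintegral_infEDist_lt x₀ hμ (ENNReal.half_pos hδ).ne'
  obtain ⟨ε, hε, hεδ⟩ := ENNReal.lt_iff_exists_nnreal_btwn.1 (ENNReal.half_pos hδ)
  have hε0 : ε ≠ 0 := (ENNReal.coe_pos.1 hε).ne'
  refine ⟨s, ε, hs, hε0, ?_⟩
  calc ∫⁻ x, ∫⁻ y, edist x y ∂softProj s ε x ∂μ ≤ ∫⁻ x, Metric.infEDist x s + ε ∂μ := by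
        refine lintegral_mono fun x => ?_
        have hne : Metric.infEDist x s ≠ ∞ := Metric.infEDist_ne_top ⟨x₀, hs⟩
        rw [lintegral_edist_softProj, ← ENNReal.coe_toNNReal hne, ← ENNReal.coe_add]
        exact ENNReal.coe_le_coe.2 (sum_softProjWeight_mul_nndist_le ⟨x₀, hs⟩ hε0 x)
    _ = ∫⁻ x, Metric.infEDist x s ∂μ + ε := by
        rw [lintegral_add_left (by fun_prop), lintegral_const, measure_univ, mul_one]
    _ < δ / 2 + δ / 2 := ENNReal.add_lt_add hlt hεδ
    _ = δ := ENNReal.add_halves δ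

end SoftProj

variable [BorelSpace X] [SecondCountableTopology X]

lemma W1e_sum_smul_dirac_le (x₀ : X) {u v : X → ℝ≥0∞} (hu : ∑ a ∈ s, u a = 1)
    (hv : ∑ a ∈ s, v a = 1) :
    W1e (∑ a ∈ s, u a • Measure.dirac a) (∑ a ∈ s, v a • Measure.dirac a) ≤
      ∑ a ∈ s, ((u a - v a) * edist x₀ a + (v a - u a) * edist x₀ a) := by
  let discrete (w : X → ℝ≥0∞) : Measure X := ∑ a ∈ s, w a • Measure.dirac a
  have discrete_univ (w : X → ℝ≥0∞) : discrete w Set.univ = ∑ a ∈ s, w a := by simp [discrete]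
  have moment (w : X → ℝ≥0∞) : ∫⁻ x, edist x₀ x ∂discrete w = ∑ a ∈ s, w a * edist x₀ a := by
    simp [discrete]
  let η := discrete fun a => min (u a) (v a)
  have hηu : η + discrete (fun a => u a - v a) = discrete u := by
    simp only [η, discrete, ← Finset.sum_add_distrib, ← add_smul, add_comm (min _ _), tsub_add_min]
  have hηv : η + discrete (fun a => v a - u a) = discrete v := by
    simp only [η, discrete, ← Finset.sum_add_distrib, ← add_smul, min_comm (u _),
      add_comm (min _ _), tsub_add_min]
  have : IsProbabilityMeasure (η + discrete fun a => u a - v a) :=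
    ⟨by rw [hηu, discrete_univ, hu]⟩
  have : IsProbabilityMeasure (η + discrete fun a => v a - u a) :=
    ⟨by rw [hηv, discrete_univ, hv]⟩
  have : IsFiniteMeasure η := isFiniteMeasure_of_le _ (Measure.le_add_right le_rfl : η ≤
    η + discrete fun a => u a - v a)
  change W1e (discrete u) (discrete v) ≤ _
  rw [← hηu, ← hηv, Finset.sum_add_distrib, ← moment, ← moment]
  exact W1e_add_le x₀ η _ _

lemma tendsto_W1e_sum_smul_dirac {ι : Type*} {F : Filter ι} {u : ι → X → ℝ≥0∞} {v : X → ℝ≥0∞}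
    (hu : ∀ n, ∑ a ∈ s, u n a = 1) (hv : ∑ a ∈ s, v a = 1)
    (h : ∀ a ∈ s, Tendsto (fun n => u n a) F (𝓝 (v a))) :
    Tendsto (fun n => W1e (∑ a ∈ s, u n a • Measure.dirac a) (∑ a ∈ s, v a • Measure.dirac a))
      F (𝓝 0) := by
  obtain ⟨x₀, -⟩ : s.Nonempty := Finset.nonempty_of_sum_ne_zero (hv ▸ one_ne_zero)
  have hterm : ∀ a ∈ s, Tendsto
      (fun n => (u n a - v a) * edist x₀ a + (v a - u n a) * edist x₀ a) F (𝓝 0) := fun a ha => by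
    have hva : v a ≠ ∞ := ENNReal.sum_ne_top.1 (hv ▸ ENNReal.one_ne_top) a ha
    have hsub := ENNReal.Tendsto.sub (h a ha) (tendsto_const_nhds (x := v a)) (.inr hva)
    have hsub' := ENNReal.Tendsto.sub (tendsto_const_nhds (x := v a)) (h a ha) (.inr hva)
    simpa using (ENNReal.Tendsto.mul_const hsub (.inr (edist_ne_top x₀ a))).add
      (ENNReal.Tendsto.mul_const hsub' (.inr (edist_ne_top x₀ a)))
  refine tendsto_of_tendsto_of_tendsto_of_le_of_le tendsto_const_nhds ?_ (fun _ => zero_le)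
    fun n => W1e_sum_smul_dirac_le x₀ (hu n) hv
  simpa only [Finset.sum_const_zero] using tendsto_finsetSum s hterm

lemma tendsto_W1e_softProj_comp (hs : s.Nonempty) (hε : ε ≠ 0) (h : Tendsto P atTop (𝓝 Q)) :
    Tendsto (fun n => W1e (softProj s ε ∘ₘ (P n : Measure X)) (softProj s ε ∘ₘ (Q : Measure X)))
      atTop (𝓝 0) := by
  have hw (a : X) := continuous_softProjWeight hs hε a
  have sum_mass (μ : ProbabilityMeasure X) :
      ∑ a ∈ s, ∫⁻ x, softProjWeight s ε a x ∂(μ : Measure X) = 1 := by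
    rw [← lintegral_finsetSum _ fun a _ => by fun_prop]
    simp only [← ENNReal.ofNNReal_finsetSum, sum_softProjWeight hs hε, ENNReal.coe_one,
      lintegral_one, measure_univ]
  simp only [softProj_comp hs hε]
  refine tendsto_W1e_sum_smul_dirac (fun n => sum_mass (P n)) (sum_mass Q) fun a ha => ?_
  have hle_one (x : X) : softProjWeight s ε a x ≤ 1 :=
    sum_softProjWeight hs hε x ▸
      Finset.single_le_sum (f := fun a => softProjWeight s ε a x) (fun _ _ => zero_le) ha
  exact tendsto_lintegral_of_le h (hw a) continuous_one hle_one (by simp) (by simp)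

lemma W1e_le_lintegral_add_lintegral_add [CompleteSpace X] (μ ν : Measure X)
    [IsProbabilityMeasure μ] [IsProbabilityMeasure ν] (κ : Kernel X X) [IsMarkovKernel κ] :
    W1e μ ν ≤ ∫⁻ x, ∫⁻ y, edist x y ∂κ x ∂μ + W1e (κ ∘ₘ μ) (κ ∘ₘ ν) +
      ∫⁻ x, ∫⁻ y, edist x y ∂κ x ∂ν := by
  refine (W1e_triangle μ (κ ∘ₘ ν) ν).trans (add_le_add ((W1e_triangle μ (κ ∘ₘ μ) _).trans
    (add_le_add (W1e_comp_le μ κ) le_rfl)) ?_)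
  rw [W1e_comm]
  exact W1e_comp_le ν κ

lemma tendsto_W1e_of_tendsto_moment [CompleteSpace X] (h : Tendsto P atTop (𝓝 Q))
    (hQ : ∫⁻ x, edist x₀ x ∂(Q : Measure X) ≠ ∞)
    (hmoment : Tendsto (fun n => ∫⁻ x, edist x₀ x ∂(P n : Measure X)) atTop
      (𝓝 (∫⁻ x, edist x₀ x ∂(Q : Measure X)))) :
    Tendsto (fun n => W1e (P n : Measure X) Q) atTop (𝓝 0) := by
  refine ENNReal.tendsto_nhds_zero.2 fun r hr => ?_
  obtain ⟨s, ε, hs, hε, hlt⟩ :=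
    exists_softProj_lintegral_lt x₀ (Q : Measure X) hQ (ENNReal.half_pos hr.ne').ne'
  have := isMarkovKernel_softProj ⟨x₀, hs⟩ hε
  have hbound := ((tendsto_lintegral_softProj h hQ hmoment hs hε).add
    (tendsto_W1e_softProj_comp ⟨x₀, hs⟩ hε h)).add_const
      (∫⁻ x, ∫⁻ y, edist x y ∂softProj s ε x ∂(Q : Measure X))
  rw [add_zero] at hbound
  have hlt_r := (ENNReal.add_lt_add hlt hlt).trans_eq (ENNReal.add_halves r)
  filter_upwards [hbound.eventually_lt_const hlt_r] with n hn
  exact (W1e_le_lintegral_add_lintegral_add _ _ _).trans hn.le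

end Quantization

section Compactness

variable {X : Type*} [MetricSpace X] [MeasurableSpace X] [BorelSpace X]

section Couplings

variable [SecondCountableTopology X]

lemma lintegral_edist_le_of_tendsto {G : ℕ → ProbabilityMeasure (X × X)}
    {H : ProbabilityMeasure (X × X)} (hGH : Tendsto G atTop (𝓝 H)) {c : ℝ≥0∞}
    (hc : Tendsto (fun n => ∫⁻ p, edist p.1 p.2 ∂(G n : Measure (X × X))) atTop (𝓝 c)) :
    ∫⁻ p, edist p.1 p.2 ∂(H : Measure (X × X)) ≤ c := by
  rw [← hc.liminf_eq]
  simp only [edist_nndist]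
  exact lintegral_le_liminf_of_tendsto hGH (f := fun p => nndist p.1 p.2) (by fun_prop)

lemma tendsto_moment_of_tendsto_lintegral_edist {ν ρ : Measure X} {ρs : ℕ → Measure X} {x₀ : X}
    (hν : ∫⁻ x, edist x₀ x ∂ν ≠ ∞) {G : ℕ → ProbabilityMeasure (X × X)}
    {H : ProbabilityMeasure (X × X)} (hGH : Tendsto G atTop (𝓝 H))
    (hG : ∀ n, (G n : Measure (X × X)) ∈ Couplings ν (ρs n))
    (hH : (H : Measure (X × X)) ∈ Couplings ν ρ)
    (hH_top : ∫⁻ p, edist p.1 p.2 ∂(H : Measure (X × X)) ≠ ∞)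
    (hcost : Tendsto (fun n => ∫⁻ p, edist p.1 p.2 ∂(G n : Measure (X × X))) atTop
      (𝓝 (∫⁻ p, edist p.1 p.2 ∂(H : Measure (X × X))))) :
    Tendsto (fun n => ∫⁻ x, edist x₀ x ∂ρs n) atTop (𝓝 (∫⁻ x, edist x₀ x ∂ρ)) := by
  have hdom {ρ : Measure X} {γ : Measure (X × X)} (hγ : γ ∈ Couplings ν ρ) :
      ∫⁻ p, (nndist x₀ p.1 + nndist p.1 p.2 : ℝ≥0) ∂γ =
        ∫⁻ x, edist x₀ x ∂ν + ∫⁻ p, edist p.1 p.2 ∂γ := by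
    simp only [ENNReal.coe_add, ← edist_nndist]
    rw [lintegral_add_left (by fun_prop), lintegral_fst_of_mem_couplings hγ (by fun_prop)]
  have hsnd := tendsto_lintegral_of_le hGH (f := fun p => nndist x₀ p.2)
    (g := fun p => nndist x₀ p.1 + nndist p.1 p.2) (by fun_prop) (by fun_prop)
    (fun p => nndist_triangle _ _ _) (by rw [hdom hH]; exact ENNReal.add_ne_top.2 ⟨hν, hH_top⟩)
    (by simpa only [hdom hH, hdom (hG _)] using tendsto_const_nhds.add hcost)
  simp only [← edist_nndist] at hsnd
  rw [lintegral_snd_of_mem_couplings hH (by fun_prop)] at hsnd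
  exact hsnd.congr fun n => lintegral_snd_of_mem_couplings (hG n) (by fun_prop)

variable [CompleteSpace X] {P Q : ℕ → ProbabilityMeasure X} {P' Q' : ProbabilityMeasure X}

lemma isTightMeasureSet_range_of_tendsto (h : Tendsto P atTop (𝓝 P')) :
    IsTightMeasureSet (Set.range fun n => (P n : Measure X)) := by
  refine (isTightMeasureSet_of_isCompact_closure (h.isCompact_insert_range.closure)).subset ?_
  rintro _ ⟨n, rfl⟩
  exact ⟨P n, Set.mem_insert_of_mem _ (Set.mem_range_self n), rfl⟩

lemma exists_subseq_tendsto_mem_couplings (hP : Tendsto P atTop (𝓝 P'))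
    (hQ : Tendsto Q atTop (𝓝 Q')) {G : ℕ → ProbabilityMeasure (X × X)}
    (hG : ∀ n, (G n : Measure (X × X)) ∈ Couplings (P n : Measure X) (Q n)) :
    ∃ (H : ProbabilityMeasure (X × X)) (φ : ℕ → ℕ), StrictMono φ ∧
      (H : Measure (X × X)) ∈ Couplings (P' : Measure X) Q' ∧ Tendsto (G ∘ φ) atTop (𝓝 H) := by
  have htight : IsTightMeasureSet
      {((γ : ProbabilityMeasure (X × X)) : Measure (X × X)) | γ ∈ Set.range G} := by
    refine .prodMk ((isTightMeasureSet_range_of_tendsto hP).subset ?_)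
      ((isTightMeasureSet_range_of_tendsto hQ).subset ?_)
    · rintro _ ⟨_, ⟨_, ⟨n, rfl⟩, rfl⟩, rfl⟩
      exact ⟨n, (hG n).2.1.symm⟩
    · rintro _ ⟨_, ⟨_, ⟨n, rfl⟩, rfl⟩, rfl⟩
      exact ⟨n, (hG n).2.2.symm⟩
  obtain ⟨H, -, φ, hφ, hGH⟩ := (isCompact_closure_of_isTightMeasureSet htight).tendsto_subseq
    fun n => subset_closure (Set.mem_range_self n)
  have marginal_eq {f : X × X → X} (hf : Continuous f) {R : ℕ → ProbabilityMeasure X}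
      {R' : ProbabilityMeasure X} (hR : Tendsto R atTop (𝓝 R'))
      (hmap : ∀ n, (G n : Measure (X × X)).map f = R n) : (H : Measure (X × X)).map f = R' := by
    have hlim := ProbabilityMeasure.tendsto_map_of_tendsto_of_continuous _ H hGH hf
    have hmap' (n : ℕ) : ((G ∘ φ) n).map hf.aemeasurable = R (φ n) := Subtype.ext (hmap (φ n))
    simp only [hmap'] at hlim
    have hHR := tendsto_nhds_unique hlim (hR.comp hφ.tendsto_atTop)
    exact congrArg Subtype.val hHR
  exact ⟨H, φ, hφ, ⟨H.2, marginal_eq continuous_fst hP fun n => (hG n).2.1,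
    marginal_eq continuous_snd hQ fun n => (hG n).2.2⟩, hGH⟩

lemma exists_mem_couplings_lintegral_eq_W1e (μ ν : Measure X) [IsProbabilityMeasure μ]
    [IsProbabilityMeasure ν] : ∃ γ ∈ Couplings μ ν, ∫⁻ p, edist p.1 p.2 ∂γ = W1e μ ν := by
  have hne : (Couplings μ ν).Nonempty :=
    ⟨μ.prod ν, mem_couplings_of_fst_of_snd Measure.fst_prod Measure.snd_prod⟩
  obtain ⟨c, -, hc, hmem⟩ :=
    exists_seq_tendsto_sInf (hne.image fun γ => ∫⁻ p, edist p.1 p.2 ∂γ) (OrderBot.bddBelow _)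
  choose γ hγ hγc using hmem
  rw [sInf_image, ← W1e] at hc
  obtain ⟨H, φ, hφ, hH, hlim⟩ := exists_subseq_tendsto_mem_couplings
    (P' := ⟨μ, inferInstance⟩) (Q' := ⟨ν, inferInstance⟩) tendsto_const_nhds tendsto_const_nhds
    (G := fun n => ⟨γ n, (hγ n).1⟩) hγ
  refine ⟨H, hH, (lintegral_edist_le_of_tendsto hlim ?_).antisymm (W1e_le_of_mem_couplings hH)⟩
  exact (hc.comp hφ.tendsto_atTop).congr fun n => (hγc (φ n)).symm

lemma exists_subseq_optimal_couplings_tendsto (hP : Tendsto P atTop (𝓝 P'))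
    (hQ : Tendsto Q atTop (𝓝 Q')) :
    ∃ (G : ℕ → ProbabilityMeasure (X × X)) (H : ProbabilityMeasure (X × X)) (φ : ℕ → ℕ),
      StrictMono φ ∧ Tendsto G atTop (𝓝 H) ∧
      (H : Measure (X × X)) ∈ Couplings (P' : Measure X) Q' ∧ ∀ n,
        (G n : Measure (X × X)) ∈ Couplings (P (φ n) : Measure X) (Q (φ n)) ∧
        ∫⁻ p, edist p.1 p.2 ∂(G n : Measure (X × X)) = W1e (P (φ n) : Measure X) (Q (φ n)) := by
  choose γ hγ hcost using fun n => exists_mem_couplings_lintegral_eq_W1e (P n : Measure X) (Q n)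
  obtain ⟨H, φ, hφ, hH, hlim⟩ :=
    exists_subseq_tendsto_mem_couplings hP hQ (G := fun n => ⟨γ n, (hγ n).1⟩) hγ
  exact ⟨_, H, φ, hφ, hlim, hH, fun n => ⟨hγ (φ n), hcost (φ n)⟩⟩

lemma W1e_le_of_tendsto (hP : Tendsto P atTop (𝓝 P')) (hQ : Tendsto Q atTop (𝓝 Q')) {c : ℝ≥0∞}
    (hc : Tendsto (fun n => W1e (P n : Measure X) (Q n)) atTop (𝓝 c)) :
    W1e (P' : Measure X) Q' ≤ c := by
  obtain ⟨G, H, φ, hφ, hGH, hH, hG⟩ := exists_subseq_optimal_couplings_tendsto hP hQ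
  refine (W1e_le_of_mem_couplings hH).trans (lintegral_edist_le_of_tendsto hGH ?_)
  exact (hc.comp hφ.tendsto_atTop).congr fun n => (hG n).2.symm

lemma tendsto_W1e_of_tendsto_W1e {ν : Measure X} (hν : ν ∈ P1 X) (hP' : (P' : Measure X) ∈ P1 X)
    (hP : Tendsto P atTop (𝓝 P'))
    (hdist : Tendsto (fun n => W1e ν (P n)) atTop (𝓝 (W1e ν P'))) :
    Tendsto (fun n => W1e (P n : Measure X) P') atTop (𝓝 0) := by
  have := hν.1
  obtain ⟨x₀⟩ := nonempty_of_isProbabilityMeasure ν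
  refine tendsto_of_subseq_tendsto fun ns hns => ?_
  obtain ⟨G, H, φ, hφ, hGH, hH, hG⟩ := exists_subseq_optimal_couplings_tendsto
    (P' := ⟨ν, inferInstance⟩) tendsto_const_nhds (hP.comp hns)
  have hcost : Tendsto (fun n => ∫⁻ p, edist p.1 p.2 ∂(G n : Measure (X × X))) atTop
      (𝓝 (W1e ν P')) :=
    (hdist.comp (hns.comp hφ.tendsto_atTop)).congr fun n => (hG n).2.symm
  have hH_cost : ∫⁻ p, edist p.1 p.2 ∂(H : Measure (X × X)) = W1e ν P' :=
    (lintegral_edist_le_of_tendsto hGH hcost).antisymm (W1e_le_of_mem_couplings hH)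
  rw [← hH_cost] at hcost
  exact ⟨φ, tendsto_W1e_of_tendsto_moment (hP.comp (hns.comp hφ.tendsto_atTop))
    ((mem_P1_iff x₀).1 hP') (tendsto_moment_of_tendsto_lintegral_edist ((mem_P1_iff x₀).1 hν) hGH
      (fun n => (hG n).1) hH (hH_cost ▸ W1e_ne_top hν hP') hcost)⟩

end Couplings

section ProperSpace

variable [ProperSpace X]

lemma isTightMeasureSet_of_moment_le (x₀ : X) {C : ℝ≥0∞} (hC : C ≠ ∞) {S : Set (Measure X)}
    (hS : ∀ μ ∈ S, ∫⁻ x, edist x₀ x ∂μ ≤ C) : IsTightMeasureSet S := by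
  refine isTightMeasureSet_iff_exists_isCompact_measure_compl_le.2 fun ε hε => ?_
  obtain ⟨n, hn, hn0⟩ : ∃ n : ℕ, C / n ≤ ε ∧ 0 < n := by
    have hlim : Tendsto (fun n : ℕ => C / n) atTop (𝓝 0) := by
      simpa only [ENNReal.div_top] using
        ENNReal.Tendsto.const_div ENNReal.tendsto_nat_nhds_top (.inr hC)
    exact ((hlim.eventually_le_const hε).and (eventually_gt_atTop 0)).exists
  refine ⟨Metric.closedBall x₀ n, isCompact_closedBall _ _, fun μ hμ => ?_⟩
  have hsubset : (Metric.closedBall x₀ n)ᶜ ⊆ {x | (n : ℝ≥0∞) ≤ edist x₀ x} := fun x hx => by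
    rw [Set.mem_compl_iff, Metric.mem_closedBall', not_le] at hx
    rw [Set.mem_ofPred_eq, edist_dist, ← ENNReal.ofReal_natCast]
    exact ENNReal.ofReal_le_ofReal hx.le
  calc μ (Metric.closedBall x₀ n)ᶜ ≤ μ {x | (n : ℝ≥0∞) ≤ edist x₀ x} := measure_mono hsubset
    _ ≤ (∫⁻ x, edist x₀ x ∂μ) / n := meas_ge_le_lintegral_div (by fun_prop)
        (Nat.cast_ne_zero.2 hn0.ne') (ENNReal.natCast_ne_top n)
    _ ≤ C / n := ENNReal.div_le_div_right (hS μ hμ) _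
    _ ≤ ε := hn

lemma exists_subseq_tendsto_mem_P1_of_moment_le (x₀ : X) {C : ℝ≥0∞} (hC : C ≠ ∞)
    {P : ℕ → ProbabilityMeasure X} (hP : ∀ n, ∫⁻ x, edist x₀ x ∂(P n : Measure X) ≤ C) :
    ∃ (Q : ProbabilityMeasure X) (φ : ℕ → ℕ), StrictMono φ ∧ (Q : Measure X) ∈ P1 X ∧
      Tendsto (P ∘ φ) atTop (𝓝 Q) := by
  have htight : IsTightMeasureSet
      {((μ : ProbabilityMeasure X) : Measure X) | μ ∈ Set.range P} :=
    isTightMeasureSet_of_moment_le x₀ hC (by rintro _ ⟨_, ⟨n, rfl⟩, rfl⟩; exact hP n)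
  obtain ⟨Q, -, φ, hφ, h⟩ := (isCompact_closure_of_isTightMeasureSet htight).tendsto_subseq
    fun n => subset_closure (Set.mem_range_self n)
  have hmoment : ∫⁻ x, edist x₀ x ∂(Q : Measure X) ≤ C := by
    simp only [edist_nndist] at hP ⊢
    refine (lintegral_le_liminf_of_tendsto h (f := nndist x₀) (by fun_prop)).trans ?_
    exact liminf_le_of_frequently_le' (.of_forall fun n => hP (φ n))
  exact ⟨Q, φ, hφ, (mem_P1_iff x₀).2 (ne_top_of_le_ne_top hC hmoment), h⟩

end ProperSpace

end Compactness

section Medians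

lemma tendsto_zero_of_tendsto_sum_add_iSup {ι τ : Type*} [Fintype ι] {F : Filter τ}
    {a b : τ → ι → ℝ} (ha : ∀ n i, 0 ≤ a n i) (hb : ∀ n i, 0 ≤ b n i)
    (h : Tendsto (fun n => ∑ i, a n i + ⨆ i, b n i) F (𝓝 0)) (i : ι) :
    Tendsto (fun n => a n i) F (𝓝 0) ∧ Tendsto (fun n => b n i) F (𝓝 0) := by
  have ha_le (n : τ) : a n i ≤ ∑ j, a n j :=
    Finset.single_le_sum (fun j _ => ha n j) (Finset.mem_univ i)
  have hb_le (n : τ) : b n i ≤ ⨆ j, b n j := le_ciSup (Set.finite_range (b n)).bddAbove i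
  refine ⟨squeeze_zero (fun n => ha n i) (fun n => ?_) h,
    squeeze_zero (fun n => hb n i) (fun n => ?_) h⟩
  · exact (ha_le n).trans (le_add_of_nonneg_right ((hb n i).trans (hb_le n)))
  · exact (hb_le n).trans (le_add_of_nonneg_left ((ha n i).trans (ha_le n)))

variable {X : Type*} [MetricSpace X] [MeasurableSpace X] [BorelSpace X] {N : ℕ}
  {l : Fin N → ℝ} {ν : Fin N → Measure X}

section Polish

variable [CompleteSpace X] [SecondCountableTopology X]

lemma W1_le_two_mul_medCost (hl : memSimplex l) (hν : ∀ i, ν i ∈ P1 X) {μ ρ : Measure X}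
    (hμ : μ ∈ Med l ν) (hρ : ρ ∈ P1 X) : W1 ρ μ ≤ 2 * medCost l ν ρ := by
  calc W1 ρ μ = ∑ i, l i * W1 ρ μ := by rw [← Finset.sum_mul, hl.2, one_mul]
    _ ≤ ∑ i, (l i * W1 (ν i) ρ + l i * W1 (ν i) μ) := by
        refine Finset.sum_le_sum fun i _ => ?_
        rw [← mul_add, W1_comm (ν i) ρ]
        exact mul_le_mul_of_nonneg_left (W1_triangle hρ (hν i) hμ.1) (hl.1 i)
    _ = medCost l ν ρ + medCost l ν μ := Finset.sum_add_distrib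
    _ ≤ 2 * medCost l ν ρ := by linarith [hμ.2 ρ hρ]

lemma tendsto_medCost {τ : Type*} {F : Filter τ} {l' : τ → Fin N → ℝ}
    {ν' : τ → Fin N → Measure X} {μs : τ → Measure X} {c : Fin N → ℝ} (hν : ∀ i, ν i ∈ P1 X)
    (hν' : ∀ n i, ν' n i ∈ P1 X) (hμs : ∀ n, μs n ∈ P1 X)
    (hlim : ∀ i, Tendsto (fun n => l' n i) F (𝓝 (l i)))
    (hW : ∀ i, Tendsto (fun n => W1 (ν' n i) (ν i)) F (𝓝 0))
    (hc : ∀ i, Tendsto (fun n => W1 (ν i) (μs n)) F (𝓝 (c i))) :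
    Tendsto (fun n => medCost (l' n) (ν' n) (μs n)) F (𝓝 (∑ i, l i * c i)) :=
  tendsto_finsetSum _ fun i _ =>
    (hlim i).mul (tendsto_W1_of_tendsto hμs (fun n => hν' n i) (hν i) (hW i) (hc i))

lemma sum_mul_le_medCost_of_tendsto {τ : Type*} {F : Filter τ} [F.NeBot] {l' : τ → Fin N → ℝ}
    {ν' : τ → Fin N → Measure X} {μs : τ → Measure X} {c : Fin N → ℝ} (hν : ∀ i, ν i ∈ P1 X)
    (hν' : ∀ n i, ν' n i ∈ P1 X) (hμs : ∀ n, μs n ∈ Med (l' n) (ν' n))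
    (hlim : ∀ i, Tendsto (fun n => l' n i) F (𝓝 (l i)))
    (hW : ∀ i, Tendsto (fun n => W1 (ν' n i) (ν i)) F (𝓝 0))
    (hc : ∀ i, Tendsto (fun n => W1 (ν i) (μs n)) F (𝓝 (c i))) {ρ : Measure X} (hρ : ρ ∈ P1 X) :
    ∑ i, l i * c i ≤ medCost l ν ρ :=
  le_of_tendsto_of_tendsto' (tendsto_medCost hν hν' (fun n => (hμs n).1) hlim hW hc)
    (tendsto_medCost hν hν' (fun _ => hρ) hlim hW fun _ => tendsto_const_nhds)
    fun n => (hμs n).2 ρ hρ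

lemma mem_Med_of_tendsto_W1 {τ : Type*} {F : Filter τ} [F.NeBot] {l' : τ → Fin N → ℝ}
    {ν' : τ → Fin N → Measure X} {μs : τ → Measure X} {μ : Measure X} (hν : ∀ i, ν i ∈ P1 X)
    (hν' : ∀ n i, ν' n i ∈ P1 X) (hμs : ∀ n, μs n ∈ Med (l' n) (ν' n))
    (hlim : ∀ i, Tendsto (fun n => l' n i) F (𝓝 (l i)))
    (hW : ∀ i, Tendsto (fun n => W1 (ν' n i) (ν i)) F (𝓝 0)) (hμ : μ ∈ P1 X)
    (h : Tendsto (fun n => W1 (μs n) μ) F (𝓝 0)) : μ ∈ Med l ν := by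
  refine ⟨hμ, fun ρ hρ => sum_mul_le_medCost_of_tendsto hν hν' hμs hlim hW (fun i => ?_) hρ⟩
  simp only [W1_comm (ν i)]
  exact tendsto_W1_of_tendsto (fun _ => hν i) (fun n => (hμs n).1) hμ h tendsto_const_nhds

variable {P : ℕ → ProbabilityMeasure X} {Q : ProbabilityMeasure X}

lemma W1_le_of_tendsto {ρ : Measure X} (hρ : ρ ∈ P1 X) (hP : ∀ n, (P n : Measure X) ∈ P1 X)
    (h : Tendsto P atTop (𝓝 Q)) {c : ℝ} (hc : Tendsto (fun n => W1 ρ (P n)) atTop (𝓝 c)) :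
    W1 ρ Q ≤ c := by
  have hc₀ : 0 ≤ c := ge_of_tendsto' hc fun n => W1_nonneg _ _
  refine ENNReal.toReal_le_of_le_ofReal hc₀ ?_
  refine W1e_le_of_tendsto (P' := ⟨ρ, hρ.1⟩) tendsto_const_nhds h ?_
  exact (ENNReal.tendsto_ofReal hc).congr fun n => ofReal_W1 hρ (hP n)

lemma tendsto_W1_of_tendsto_W1 {ρ : Measure X} (hρ : ρ ∈ P1 X)
    (hP : ∀ n, (P n : Measure X) ∈ P1 X) (hQ : (Q : Measure X) ∈ P1 X)
    (h : Tendsto P atTop (𝓝 Q)) (hdist : Tendsto (fun n => W1 ρ (P n)) atTop (𝓝 (W1 ρ Q))) :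
    Tendsto (fun n => W1 (P n : Measure X) Q) atTop (𝓝 0) := by
  have hdist' := ENNReal.tendsto_ofReal hdist
  simp only [ofReal_W1 hρ (hP _), ofReal_W1 hρ hQ] at hdist'
  exact (ENNReal.tendsto_toReal ENNReal.zero_ne_top).comp
    (tendsto_W1e_of_tendsto_W1e hρ hQ h hdist')

variable {l' : ℕ → Fin N → ℝ} {ν' : ℕ → Fin N → Measure X}

lemma exists_forall_W1_le (hν : ∀ i, ν i ∈ P1 X) (hl' : ∀ n, memSimplex (l' n))
    (hν' : ∀ n i, ν' n i ∈ P1 X) (hlim : ∀ i, Tendsto (fun n => l' n i) atTop (𝓝 (l i)))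
    (hW : ∀ i, Tendsto (fun n => W1 (ν' n i) (ν i)) atTop (𝓝 0)) {μs : ℕ → Measure X}
    (hμs : ∀ n, μs n ∈ Med (l' n) (ν' n)) {ρ : Measure X} (hρ : ρ ∈ P1 X) :
    ∃ B, ∀ n, W1 ρ (μs n) ≤ B := by
  obtain ⟨B, hB⟩ := (tendsto_medCost hν hν' (fun _ => hρ) hlim hW
    fun _ => tendsto_const_nhds).bddAbove_range
  refine ⟨2 * B, fun n => (W1_le_two_mul_medCost (hl' n) (hν' n) (hμs n) hρ).trans ?_⟩
  exact mul_le_mul_of_nonneg_left (hB (Set.mem_range_self n)) zero_le_two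

lemma mem_Med_and_eq_of_tendsto (hl : ∀ i, 0 ≤ l i) (hν : ∀ i, ν i ∈ P1 X)
    (hν' : ∀ n i, ν' n i ∈ P1 X) (hlim : ∀ i, Tendsto (fun n => l' n i) atTop (𝓝 (l i)))
    (hW : ∀ i, Tendsto (fun n => W1 (ν' n i) (ν i)) atTop (𝓝 0))
    (hP : ∀ n, (P n : Measure X) ∈ Med (l' n) (ν' n)) (hQ : (Q : Measure X) ∈ P1 X)
    (h : Tendsto P atTop (𝓝 Q)) {c : Fin N → ℝ}
    (hc : ∀ i, Tendsto (fun n => W1 (ν i) (P n)) atTop (𝓝 (c i))) :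
    (Q : Measure X) ∈ Med l ν ∧ ∀ i, l i ≠ 0 → W1 (ν i) Q = c i := by
  have hmin : ∀ ρ ∈ P1 X, ∑ i, l i * c i ≤ medCost l ν ρ := fun ρ hρ =>
    sum_mul_le_medCost_of_tendsto hν hν' hP hlim hW hc hρ
  have hterm : ∀ i ∈ Finset.univ, l i * W1 (ν i) Q ≤ l i * c i := fun i _ =>
    mul_le_mul_of_nonneg_left (W1_le_of_tendsto (hν i) (fun n => (hP n).1) h (hc i)) (hl i)
  have hcost : medCost l ν Q = ∑ i, l i * c i :=
    (Finset.sum_le_sum hterm).antisymm (hmin Q hQ)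
  refine ⟨⟨hQ, fun ρ hρ => hcost.le.trans (hmin ρ hρ)⟩, fun i hi => mul_left_cancel₀ hi ?_⟩
  exact (Finset.sum_eq_sum_iff_of_le hterm).1 hcost i (Finset.mem_univ i)

end Polish

variable [ProperSpace X]

lemma exists_subseq_tendsto_mem_P1_of_W1_le {ρ : Measure X} (hρ : ρ ∈ P1 X)
    {P : ℕ → ProbabilityMeasure X} (hP : ∀ n, (P n : Measure X) ∈ P1 X) {B : ℝ}
    (hB : ∀ n, W1 ρ (P n) ≤ B) :
    ∃ (Q : ProbabilityMeasure X) (φ : ℕ → ℕ), StrictMono φ ∧ (Q : Measure X) ∈ P1 X ∧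
      Tendsto (P ∘ φ) atTop (𝓝 Q) := by
  have := hρ.1
  obtain ⟨x₀⟩ := nonempty_of_isProbabilityMeasure ρ
  refine exists_subseq_tendsto_mem_P1_of_moment_le x₀
    (ENNReal.add_ne_top.2 ⟨(mem_P1_iff x₀).1 hρ, ENNReal.ofReal_ne_top (r := B)⟩) fun n => ?_
  refine (moment_le_add_W1e x₀ ρ (P n)).trans (add_le_add_right ?_ _)
  rw [← ofReal_W1 hρ (hP n)]
  exact ENNReal.ofReal_le_ofReal (hB n)

lemma exists_subseq_tendsto_W1_mem_Med {l' : ℕ → Fin N → ℝ} {ν' : ℕ → Fin N → Measure X}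
    {μs : ℕ → Measure X} (hl : memSimplex l) (hν : ∀ i, ν i ∈ P1 X)
    (hl' : ∀ n, memSimplex (l' n)) (hν' : ∀ n i, ν' n i ∈ P1 X)
    (hμs : ∀ n, μs n ∈ Med (l' n) (ν' n)) (hlim : ∀ i, Tendsto (fun n => l' n i) atTop (𝓝 (l i)))
    (hW : ∀ i, Tendsto (fun n => W1 (ν' n i) (ν i)) atTop (𝓝 0)) :
    ∃ φ : ℕ → ℕ, StrictMono φ ∧ ∃ μ ∈ Med l ν,
      Tendsto (fun n => W1 (μs (φ n)) μ) atTop (𝓝 0) := by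
  obtain ⟨P, rfl⟩ : ∃ P : ℕ → ProbabilityMeasure X, (fun n => (P n : Measure X)) = μs :=
    ⟨fun n => ⟨μs n, (hμs n).1.1⟩, rfl⟩
  obtain ⟨i, -, hi⟩ : ∃ i ∈ Finset.univ, l i ≠ 0 :=
    Finset.exists_ne_zero_of_sum_ne_zero (hl.2 ▸ one_ne_zero)
  choose B hB using fun j => exists_forall_W1_le hν hl' hν' hlim hW hμs (hν j)
  obtain ⟨Q, φ, hφ, hQ, hPQ⟩ :=
    exists_subseq_tendsto_mem_P1_of_W1_le (hν i) (fun n => (hμs n).1) (hB i)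
  obtain ⟨c, -, ψ, hψ, hc⟩ := tendsto_subseq_of_bounded (Metric.isBounded_Icc 0 B)
    (x := fun n j => W1 (ν j) (P (φ n))) fun n => ⟨fun j => W1_nonneg _ _, fun j => hB j _⟩
  rw [tendsto_pi_nhds] at hc
  have hφψ := (hφ.comp hψ).tendsto_atTop
  have hPQψ : Tendsto (fun n => P (φ (ψ n))) atTop (𝓝 Q) := hPQ.comp hψ.tendsto_atTop
  obtain ⟨hMed, hWQ⟩ := mem_Med_and_eq_of_tendsto (P := fun n => P (φ (ψ n))) hl.1 hν
    (fun n => hν' (φ (ψ n))) (fun j => (hlim j).comp hφψ) (fun j => (hW j).comp hφψ)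
    (fun n => hμs (φ (ψ n))) hQ hPQψ hc
  exact ⟨φ ∘ ψ, hφ.comp hψ, Q, hMed,
    tendsto_W1_of_tendsto_W1 (hν i) (fun n => (hμs _).1) hQ hPQψ (by rw [hWQ i hi]; exact hc i)⟩

end Medians

/-- Under convergence of the data `∑ᵢ |λᵢⁿ − λᵢ| + maxᵢ W₁(νᵢⁿ,νᵢ) → 0`,
any sequence of medians `μⁿ ∈ Med_{λⁿ}(νⁿ)` admits a subsequence converging in `W₁`
distance to some `μ ∈ Med_λ(ν)`; in particular `Med_λ(ν)` is (sequentially) compact for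
the `W₁` distance, and the set-valued map `(λ,ν) ↦ Med_λ(ν)` has a closed graph for the
`W₁` distance. -/
theorem medians_W1_compactness_and_stability
    {X : Type*} [MetricSpace X] [ProperSpace X] [MeasurableSpace X] [BorelSpace X]
    {N : ℕ} (hN : 1 ≤ N) [NeZero N]
    {l : Fin N → ℝ} (hl : memSimplex l) {ν : Fin N → Measure X} (hν : ∀ i, ν i ∈ P1 X)
    {l' : ℕ → Fin N → ℝ} (hl' : ∀ n, memSimplex (l' n))
    {ν' : ℕ → Fin N → Measure X} (hν' : ∀ n i, ν' n i ∈ P1 X)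
    (hconv : Tendsto
      (fun n => (∑ i, |l' n i - l i|) + ⨆ i, W1 (ν' n i) (ν i)) atTop (𝓝 0))
    (μs : ℕ → Measure X) (hμs : ∀ n, μs n ∈ Med (l' n) (ν' n)) :
    (∃ φ : ℕ → ℕ, StrictMono φ ∧ ∃ μ ∈ Med l ν,
        Tendsto (fun n => W1 (μs (φ n)) μ) atTop (𝓝 0)) ∧
    (∀ ρs : ℕ → Measure X, (∀ n, ρs n ∈ Med l ν) →
        ∃ ψ : ℕ → ℕ, StrictMono ψ ∧ ∃ ρ ∈ Med l ν,
          Tendsto (fun n => W1 (ρs (ψ n)) ρ) atTop (𝓝 0)) ∧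
    (∀ μ ∈ P1 X, Tendsto (fun n => W1 (μs n) μ) atTop (𝓝 0) → μ ∈ Med l ν) := by
  have hdata := tendsto_zero_of_tendsto_sum_add_iSup (fun _ _ => abs_nonneg _)
    (fun _ _ => W1_nonneg _ _) hconv
  have hlim : ∀ i, Tendsto (fun n => l' n i) atTop (𝓝 (l i)) := fun i =>
    tendsto_iff_dist_tendsto_zero.2 (hdata i).1
  have hW : ∀ i, Tendsto (fun n => W1 (ν' n i) (ν i)) atTop (𝓝 0) := fun i => (hdata i).2
  have hWself : ∀ i, Tendsto (fun _ : ℕ => W1 (ν i) (ν i)) atTop (𝓝 0) := fun i => by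
    have := (hν i).1
    simp only [W1_self, tendsto_const_nhds]
  exact ⟨exists_subseq_tendsto_W1_mem_Med hl hν hl' hν' hμs hlim hW,
    fun ρs hρs => exists_subseq_tendsto_W1_mem_Med hl hν (fun _ => hl) (fun _ => hν) hρs
      (fun _ => tendsto_const_nhds) hWself,
    fun μ hμ h => mem_Med_of_tendsto_W1 hν hν' hμs hlim hW hμ h⟩
end
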